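/- Theorem (Faber-Krahn implies heat kernel upper bound): Let (Γ, π, μ) be a weighted graph with controlled and uniformly lazy weights, and let F be a positive function of pairs (z, r) with z ∈ Γ, r > 0, such that Λ(B(z,r), ν) = (C/r²)(F(z,r)/ν)^α is a relative Faber-Krahn function of Γ for some constants C, α > 0. Then there exist constants c₁, c₂ > 0 such that for all x, y ∈ Γ and all integers n ≥ 1: p(n, x, y) ≤ c₁ (F(x, √n) F(y, √n))^{−1/2} exp(−d(x,y)²/(c₂ n)). -/

import Mathlib

open scoped BigOperators

/-- Sum of a real-valued function over a set of vertices. -/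
noncomputable def setSum {V : Type*} (A : Set V) (f : V → ℝ) : ℝ := ∑' y : A, f (y : V)

open Classical in
/-- The Markov kernel attached to vertex weights `pw` and edge weights `ew`. -/
noncomputable def mkernel {V : Type*} (pw : V → ℝ) (ew : V → V → ℝ) (x y : V) : ℝ :=
  if x = y then 1 - (∑' z, ew x z) / pw x else ew x y / pw x

open Classical in
/-- Iterates (convolution powers) of the Markov kernel. -/
noncomputable def mkernelPow {V : Type*} (pw : V → ℝ) (ew : V → V → ℝ) : ℕ → V → V → ℝ
  | 0 => fun x y => if x = y then 1 else 0
  | n + 1 => fun x y => ∑' z, mkernel pw ew x z * mkernelPow pw ew n z y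

/-- The heat kernel (transition density) of the random walk. -/
noncomputable def mheat {V : Type*} (pw : V → ℝ) (ew : V → V → ℝ) (n : ℕ) (x y : V) : ℝ :=
  mkernelPow pw ew n x y / pw y

/-- A weighted graph: a simple connected graph with symmetric, adapted edge weights
subordinate to positive vertex weights. -/
structure WeightedGraph (V : Type*) where
  G : SimpleGraph V
  wV : V → ℝ
  wE : V → V → ℝ
  wV_pos : ∀ x, 0 < wV x
  wE_nonneg : ∀ x y, 0 ≤ wE x y
  wE_symm : ∀ x y, wE x y = wE y x
  adapted : ∀ x y, 0 < wE x y ↔ G.Adj x y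
  connected : G.Connected
  wE_summable : ∀ x, Summable fun y => wE x y
  subordinate : ∀ x, (∑' y, wE x y) ≤ wV x

namespace WeightedGraph

variable {V : Type*}

/-- Controlled weights with constant `Cc`. -/
def Controlled (Γ : WeightedGraph V) (Cc : ℝ) : Prop :=
  1 < Cc ∧ ∀ x y, Γ.G.Adj x y → Γ.wV x ≤ Cc * Γ.wE x y

/-- Uniformly lazy weights with constant `Ce`. -/
def UniformlyLazy (Γ : WeightedGraph V) (Ce : ℝ) : Prop :=
  Ce ∈ Set.Ioo (0 : ℝ) 1 ∧ ∀ x, (∑' y, Γ.wE x y) ≤ (1 - Ce) * Γ.wV x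

/-- Closed ball for the graph distance. -/
noncomputable def ball (Γ : WeightedGraph V) (x : V) (r : ℝ) : Set V :=
  {y | (Γ.G.dist x y : ℝ) ≤ r}

/-- Volume of a ball. -/
noncomputable def vol (Γ : WeightedGraph V) (x : V) (r : ℝ) : ℝ :=
  setSum (Γ.ball x r) Γ.wV

/-- Dirichlet energy of a function. -/
noncomputable def energy (Γ : WeightedGraph V) (f : V → ℝ) : ℝ :=
  (∑' x, ∑' y, (f x - f y) ^ 2 * Γ.wE x y) / 2

/-- Squared `L²`-norm of a function. -/
noncomputable def sqnorm (Γ : WeightedGraph V) (f : V → ℝ) : ℝ :=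
  ∑' x, f x ^ 2 * Γ.wV x

/-- The first Dirichlet eigenvalue of a finite set `Ω`. -/
noncomputable def lambda1 (Γ : WeightedGraph V) (Ω : Finset V) : ℝ :=
  sInf {q | ∃ f : V → ℝ, f ≠ 0 ∧ (∀ x, f x ≠ 0 → x ∈ Ω) ∧ q = Γ.energy f / Γ.sqnorm f}

/-- `Λ` is a relative Faber-Krahn function of `Γ`: for balls `B(z,r)` the map
`ν ↦ Λ z r ν` is non-increasing, and `λ₁(Ω) ≥ Λ(B, π(Ω))` for nonempty finite `Ω ⊆ B`. -/
def IsRelFK (Γ : WeightedGraph V) (Λ : V → ℝ → ℝ → ℝ) : Prop :=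
  (∀ z r ν₁ ν₂, 0 < ν₁ → ν₁ ≤ ν₂ → Λ z r ν₂ ≤ Λ z r ν₁) ∧
  ∀ z : V, ∀ r : ℝ, ∀ Ω : Finset V, Ω.Nonempty → (∀ x ∈ Ω, x ∈ Γ.ball z r) →
    Λ z r (∑ x ∈ Ω, Γ.wV x) ≤ Γ.lambda1 Ω

/-- The heat kernel of the weighted graph. -/
noncomputable def heatKernel (Γ : WeightedGraph V) : ℕ → V → V → ℝ :=
  mheat Γ.wV Γ.wE

/-- `ε`-average of a function over closed balls of radius `ε`. -/
noncomputable def avg (Γ : WeightedGraph V) (ε : ℝ) (f : V → ℝ) (x : V) : ℝ :=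
  setSum (Γ.ball x ε) (fun y => f y * Γ.wV y) / Γ.vol x ε

/-- `Φ` is a quasi-isometry between weighted graphs with constants `ε, a, b, Cq`. -/
structure IsQI {V₁ V₂ : Type*} (Γ₁ : WeightedGraph V₁) (Γ₂ : WeightedGraph V₂)
    (Φ : V₁ → V₂) (ε a b Cq : ℝ) : Prop where
  eps_pos : 0 < ε
  a_pos : 0 < a
  b_nonneg : 0 ≤ b
  Cq_pos : 0 < Cq
  dense : ∀ z : V₂, ∃ x : V₁, (Γ₂.G.dist (Φ x) z : ℝ) ≤ ε
  dist_lower : ∀ x y : V₁, a⁻¹ * (Γ₁.G.dist x y : ℝ) - b ≤ (Γ₂.G.dist (Φ x) (Φ y) : ℝ)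
  dist_upper : ∀ x y : V₁, (Γ₂.G.dist (Φ x) (Φ y) : ℝ) ≤ a * (Γ₁.G.dist x y : ℝ)
  weight_lower : ∀ x, Cq⁻¹ * Γ₁.wV x ≤ Γ₂.wV (Φ x)
  weight_upper : ∀ x, Γ₂.wV (Φ x) ≤ Cq * Γ₁.wV x

end WeightedGraph

/-!
On a finite set the walk killed outside it is a lazy reversible sub-Markov kernel `K`. Laziness
makes the Dirichlet form control the decrease of the `ℓ²` norm in one step, and commuting `K` with
a cutoff function gives a Caccioppoli inequality, both for `K ^ n u` and for its truncations
`(K ^ n u - θ)⁺`. Under the Faber-Krahn inequality the support of a truncation at a higher level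
has small measure, hence a large spectral gap, so De Giorgi's iteration over shrinking balls, time
intervals and truncations turns an `ℓ²` bound on a ball into a pointwise bound at its centre. The
iteration stops when the decrement of the radius falls below the range of the walk; by then the
remaining mass is compared with the weight of the centre, which the Faber-Krahn inequality for a
single vertex bounds from below.

By duality this mean value inequality bounds the heat kernel from `x` in `ℓ²` with a weight growing
exponentially in the distance to `x` (Davies' method), and Cauchy-Schwarz at half time with an
optimal exponential rate gives the Gaussian bound. The constants do not depend on the finite set,
and the killed heat kernels converge to that of the graph as the sets exhaust it.
-/

section FiniteKernels

open scoped Matrix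

variable {ι : Type*} [Fintype ι] {p : ι → ℝ} {K : Matrix ι ι ℝ} {b c : ℝ}

/-- The squared norm of `f` in `ℓ²(p)`, the space of functions on `ι` weighted by `p`. -/
def weightedNormSq (p f : ι → ℝ) : ℝ := ∑ x, p x * f x ^ 2

/-- The Dirichlet form `⟨(1 - K)g, g⟩` of the kernel `K` on `ℓ²(p)`. -/
noncomputable def dirichletForm (p : ι → ℝ) (K : Matrix ι ι ℝ) (g : ι → ℝ) : ℝ :=
  weightedNormSq p g - ⟪K *ᵥ g, g⟫_[ℝ, p]

/-- Detailed balance: `K` is symmetric with respect to the weights `p`. -/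
def IsReversible (p : ι → ℝ) (K : Matrix ι ι ℝ) : Prop :=
  ∀ x y, p x * K x y = p y * K y x

/-- A sub-Markov kernel reversible with respect to the positive weights `p` and with holding
probabilities at least `c > 0`. Rows may sum to less than `1`, so that the restriction of a Markov
kernel to a finite set of states (the walk killed on leaving it) is allowed. -/
structure IsLazySubMarkov (p : ι → ℝ) (K : Matrix ι ι ℝ) (c : ℝ) : Prop where
  weight_pos : ∀ x, 0 < p x
  nonneg : ∀ x y, 0 ≤ K x y
  reversible : IsReversible p K
  row_sum_le_one : ∀ x, ∑ y, K x y ≤ 1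
  holding_pos : 0 < c
  holding_le : ∀ x, c ≤ K x x

theorem weightedNormSq_nonneg (hp : ∀ x, 0 < p x) (f : ι → ℝ) : 0 ≤ weightedNormSq p f :=
  Finset.sum_nonneg fun x _ => mul_nonneg (hp x).le (sq_nonneg _)

theorem weightedNormSq_mono (hp : ∀ x, 0 < p x) {f g : ι → ℝ} (hf : 0 ≤ f) (hfg : f ≤ g) :
    weightedNormSq p f ≤ weightedNormSq p g :=
  Finset.sum_le_sum fun x _ =>
    mul_le_mul_of_nonneg_left (pow_le_pow_left₀ (hf x) (hfg x) 2) (hp x).le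

theorem wInner_real_eq_sum (p f g : ι → ℝ) : ⟪f, g⟫_[ℝ, p] = ∑ x, p x * (f x * g x) := by
  simp only [RCLike.wInner, smul_eq_mul, RCLike.inner_apply, conj_trivial, mul_comm]

theorem wInner_real_comm (p f g : ι → ℝ) : ⟪f, g⟫_[ℝ, p] = ⟪g, f⟫_[ℝ, p] := by
  simp only [wInner_real_eq_sum, mul_comm]

theorem weightedNormSq_smul (p f : ι → ℝ) (a : ℝ) :
    weightedNormSq p (a • f) = a ^ 2 * weightedNormSq p f := by
  simp only [weightedNormSq, Pi.smul_apply, smul_eq_mul, Finset.mul_sum]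
  exact Finset.sum_congr rfl fun x _ => by ring

theorem weightedNormSq_add (p f g : ι → ℝ) :
    weightedNormSq p (f + g) =
      weightedNormSq p f + 2 * ⟪f, g⟫_[ℝ, p] + weightedNormSq p g := by
  simp only [weightedNormSq, wInner_real_eq_sum, Finset.mul_sum, ← Finset.sum_add_distrib,
    Pi.add_apply]
  exact Finset.sum_congr rfl fun x _ => by ring

theorem weightedNormSq_sub (p f g : ι → ℝ) :
    weightedNormSq p (f - g) =
      weightedNormSq p f - 2 * ⟪f, g⟫_[ℝ, p] + weightedNormSq p g := by
  simp only [weightedNormSq, wInner_real_eq_sum, Finset.mul_sum, ← Finset.sum_add_distrib,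
    ← Finset.sum_sub_distrib, Pi.sub_apply]
  exact Finset.sum_congr rfl fun x _ => by ring

theorem neg_two_mul_wInner_le (hp : ∀ x, 0 < p x) {ε : ℝ} (hε : 0 < ε) (f g : ι → ℝ) :
    -(2 * ⟪f, g⟫_[ℝ, p]) ≤ ε * weightedNormSq p f + ε⁻¹ * weightedNormSq p g := by
  have h := mul_nonneg (inv_pos.2 hε).le (weightedNormSq_nonneg hp (ε • f + g))
  rw [weightedNormSq_add, weightedNormSq_smul, RCLike.wInner_smul_left] at h
  simp only [star_trivial, smul_eq_mul] at h
  field_simp at h ⊢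
  linarith

theorem wInner_le_sqrt_mul_sqrt (hp : ∀ x, 0 < p x) (f g : ι → ℝ) :
    ⟪f, g⟫_[ℝ, p] ≤ √(weightedNormSq p f) * √(weightedNormSq p g) := by
  rw [← Real.sqrt_mul (weightedNormSq_nonneg hp f), wInner_real_eq_sum]
  refine Real.le_sqrt_of_sq_le (Finset.sum_sq_le_sum_mul_sum_of_sq_le_mul _
    (fun x _ => mul_nonneg (hp x).le (sq_nonneg _))
    (fun x _ => mul_nonneg (hp x).le (sq_nonneg _)) fun x _ => le_of_eq (by ring))

theorem sq_mulVec_le (hK : ∀ x y, 0 ≤ K x y) (hb : ∀ x, ∑ y, K x y ≤ b) (g : ι → ℝ) (x : ι) :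
    (K *ᵥ g) x ^ 2 ≤ b * (K *ᵥ (g ^ 2)) x := by
  have hnn : ∀ y, 0 ≤ K x y * g y ^ 2 := fun y => mul_nonneg (hK x y) (sq_nonneg _)
  calc (∑ y, K x y * g y) ^ 2 ≤ (∑ y, K x y) * ∑ y, K x y * g y ^ 2 :=
        Finset.sum_sq_le_sum_mul_sum_of_sq_le_mul _ (fun y _ => hK x y) (fun y _ => hnn y)
          fun y _ => le_of_eq (by ring)
    _ ≤ b * ∑ y, K x y * g y ^ 2 :=
        mul_le_mul_of_nonneg_right (hb x) (Finset.sum_nonneg fun y _ => hnn y)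

theorem IsReversible.sum_mul_mulVec_le (hrev : IsReversible p K) (hp : ∀ x, 0 < p x)
    (hb : ∀ x, ∑ y, K x y ≤ b) {a : ι → ℝ} (ha : 0 ≤ a) :
    ∑ x, p x * (K *ᵥ a) x ≤ b * ∑ x, p x * a x :=
  calc ∑ x, p x * (K *ᵥ a) x = ∑ y, p y * a y * ∑ x, K y x := by
        simp only [Matrix.mulVec, dotProduct, Finset.mul_sum]
        rw [Finset.sum_comm]
        refine Finset.sum_congr rfl fun y _ => Finset.sum_congr rfl fun x _ => ?_
        rw [← mul_assoc, hrev x y]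
        ring
    _ ≤ ∑ y, p y * a y * b := Finset.sum_le_sum fun y _ =>
        mul_le_mul_of_nonneg_left (hb y) (mul_nonneg (hp y).le (ha y))
    _ = b * ∑ y, p y * a y := by rw [← Finset.sum_mul, mul_comm]

/-- Schur's test. -/
theorem IsReversible.weightedNormSq_mulVec_le (hrev : IsReversible p K) (hp : ∀ x, 0 < p x)
    (hK : ∀ x y, 0 ≤ K x y) (hb0 : 0 ≤ b) (hb : ∀ x, ∑ y, K x y ≤ b) (g : ι → ℝ) :
    weightedNormSq p (K *ᵥ g) ≤ b ^ 2 * weightedNormSq p g :=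
  calc weightedNormSq p (K *ᵥ g) ≤ ∑ x, p x * (b * (K *ᵥ (g ^ 2)) x) :=
        Finset.sum_le_sum fun x _ => mul_le_mul_of_nonneg_left (sq_mulVec_le hK hb g x) (hp x).le
    _ = b * ∑ x, p x * (K *ᵥ (g ^ 2)) x := by
        rw [Finset.mul_sum]
        exact Finset.sum_congr rfl fun x _ => by ring
    _ ≤ b * (b * ∑ x, p x * (g ^ 2) x) :=
        mul_le_mul_of_nonneg_left (hrev.sum_mul_mulVec_le hp hb fun x => sq_nonneg (g x)) hb0
    _ = b ^ 2 * weightedNormSq p g := by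
        rw [← mul_assoc, ← sq]
        rfl

theorem IsReversible.pow [DecidableEq ι] (hrev : IsReversible p K) (n : ℕ) :
    IsReversible p (K ^ n) := by
  induction n with
  | zero =>
    intro x y
    rcases eq_or_ne x y with rfl | hxy
    · rfl
    · simp only [pow_zero, Matrix.one_apply_ne hxy, Matrix.one_apply_ne hxy.symm, mul_zero]
  | succ n ih =>
    intro x y
    rw [pow_succ, Matrix.mul_apply, ← pow_succ, pow_succ', Matrix.mul_apply, Finset.mul_sum,
      Finset.mul_sum]
    refine Finset.sum_congr rfl fun z _ => ?_
    rw [← mul_assoc, ih x z, mul_right_comm, hrev z y]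
    ring

namespace IsLazySubMarkov

theorem weightedNormSq_mulVec_le (h : IsLazySubMarkov p K c) (g : ι → ℝ) :
    weightedNormSq p (K *ᵥ g) ≤ weightedNormSq p g := by
  simpa only [one_pow, one_mul] using
    h.reversible.weightedNormSq_mulVec_le h.weight_pos h.nonneg zero_le_one h.row_sum_le_one g

theorem weightedNormSq_sub_mulVec_le (h : IsLazySubMarkov p K c) (g : ι → ℝ) :
    weightedNormSq p (g - K *ᵥ g) ≤ 2 * dirichletForm p K g := by
  rw [weightedNormSq_sub, wInner_real_comm, dirichletForm]
  linarith [h.weightedNormSq_mulVec_le g]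

theorem dirichletForm_nonneg (h : IsLazySubMarkov p K c) (g : ι → ℝ) : 0 ≤ dirichletForm p K g := by
  linarith [h.weightedNormSq_sub_mulVec_le g, weightedNormSq_nonneg h.weight_pos (g - K *ᵥ g)]

theorem holding_le_one (h : IsLazySubMarkov p K c) (x : ι) : c ≤ 1 :=
  ((h.holding_le x).trans
    (Finset.single_le_sum (fun y _ => h.nonneg x y) (Finset.mem_univ x))).trans
    (h.row_sum_le_one x)

theorem mulVec_nonneg (h : IsLazySubMarkov p K c) {g : ι → ℝ} (hg : 0 ≤ g) : 0 ≤ K *ᵥ g :=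
  fun x => Finset.sum_nonneg fun y _ => mul_nonneg (h.nonneg x y) (hg y)

theorem dirichletForm_le_of_nonneg (h : IsLazySubMarkov p K c) {g : ι → ℝ} (hg : 0 ≤ g) :
    dirichletForm p K g ≤ weightedNormSq p g := by
  rw [dirichletForm, wInner_real_eq_sum, sub_le_self_iff]
  exact Finset.sum_nonneg fun x _ =>
    mul_nonneg (h.weight_pos x).le (mul_nonneg (h.mulVec_nonneg hg x) (hg x))

/-- Apply Schur's test to `K - c`, whose entries are nonnegative by laziness. -/
theorem weightedNormSq_mulVec_le_sub (h : IsLazySubMarkov p K c) (g : ι → ℝ) :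
    weightedNormSq p (K *ᵥ g) ≤ weightedNormSq p g - 2 * c * dirichletForm p K g := by
  classical
  rcases isEmpty_or_nonempty ι with _ | ⟨⟨x₀⟩⟩
  · simp only [weightedNormSq, dirichletForm, Finset.univ_eq_empty, Finset.sum_empty,
      RCLike.wInner_of_isEmpty, sub_zero, mul_zero, le_refl]
  set M : Matrix ι ι ℝ := K - c • 1 with hM
  have hM_apply (x y : ι) : M x y = K x y - if x = y then c else 0 := by
    simp only [hM, Matrix.sub_apply, Matrix.smul_apply, Matrix.one_apply, smul_eq_mul, mul_ite,
      mul_one, mul_zero]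
  have hM_nonneg (x y : ι) : 0 ≤ M x y := by
    rw [hM_apply]
    split_ifs with hxy
    · subst hxy
      exact sub_nonneg.2 (h.holding_le x)
    · simpa only [sub_zero] using h.nonneg x y
  have hM_rev : IsReversible p M := fun x y => by
    rcases eq_or_ne x y with rfl | hxy
    · rfl
    · simp only [hM_apply, if_neg hxy, if_neg hxy.symm, sub_zero, h.reversible x y]
  have hM_row (x : ι) : ∑ y, M x y ≤ 1 - c := by
    simp only [hM_apply, Finset.sum_sub_distrib, Finset.sum_ite_eq, Finset.mem_univ, if_true]
    linarith [h.row_sum_le_one x]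
  have hcontr := hM_rev.weightedNormSq_mulVec_le h.weight_pos hM_nonneg
    (sub_nonneg.2 (h.holding_le_one x₀)) hM_row g
  have hsplit : M *ᵥ g = K *ᵥ g - c • g := by
    rw [hM, Matrix.sub_mulVec, Matrix.smul_mulVec, Matrix.one_mulVec]
  rw [hsplit, weightedNormSq_sub, weightedNormSq_smul, RCLike.wInner_smul_right, smul_eq_mul]
    at hcontr
  rw [dirichletForm]
  linarith

end IsLazySubMarkov

/-- The energy `∑ p(x) K(x,y) (φ(x) - φ(y))² v(y)²` that `v` sees in the gradient of the cutoff
function `φ`; it is the error term of the Caccioppoli inequality. -/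
def cutoffEnergy (p : ι → ℝ) (K : Matrix ι ι ℝ) (φ v : ι → ℝ) : ℝ :=
  ∑ x, ∑ y, p x * K x y * ((φ x - φ y) ^ 2 * v y ^ 2)

/-- The commutator of `K` and of multiplication by `φ`, applied to `v`. -/
def kernelCommutator (K : Matrix ι ι ℝ) (φ v : ι → ℝ) : ι → ℝ :=
  φ * (K *ᵥ v) - K *ᵥ (φ * v)

theorem kernelCommutator_apply (φ v : ι → ℝ) (x : ι) :
    kernelCommutator K φ v x = (K *ᵥ fun y => (φ x - φ y) * v y) x := by
  simp only [kernelCommutator, Pi.sub_apply, Pi.mul_apply, Matrix.mulVec, dotProduct,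
    Finset.mul_sum, ← Finset.sum_sub_distrib]
  exact Finset.sum_congr rfl fun y _ => by ring

theorem IsReversible.sum_sum_swap (hrev : IsReversible p K) (g : ι → ι → ℝ) :
    ∑ x, ∑ y, p x * K x y * g x y = ∑ x, ∑ y, p x * K x y * g y x := by
  rw [Finset.sum_comm]
  exact Finset.sum_congr rfl fun x _ => Finset.sum_congr rfl fun y _ => by rw [hrev y x]

namespace IsLazySubMarkov

theorem weightedNormSq_kernelCommutator_le (h : IsLazySubMarkov p K c) (φ v : ι → ℝ) :
    weightedNormSq p (kernelCommutator K φ v) ≤ cutoffEnergy p K φ v := by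
  refine Finset.sum_le_sum fun x _ => ?_
  calc p x * kernelCommutator K φ v x ^ 2
      ≤ p x * (1 * (K *ᵥ (fun y => (φ x - φ y) * v y) ^ 2) x) := by
        rw [kernelCommutator_apply]
        exact mul_le_mul_of_nonneg_left (sq_mulVec_le h.nonneg h.row_sum_le_one _ x)
          (h.weight_pos x).le
    _ = ∑ y, p x * K x y * ((φ x - φ y) ^ 2 * v y ^ 2) := by
        rw [one_mul, Matrix.mulVec, dotProduct, Finset.mul_sum]
        exact Finset.sum_congr rfl fun y _ => by simp only [Pi.pow_apply, mul_pow, mul_assoc]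

/-- By reversibility the left side is `∑ p(x) K(x,y) (φ(x) - φ(y))² v(x) v(y)`. -/
theorem two_mul_wInner_kernelCommutator_le (h : IsLazySubMarkov p K c) (φ v : ι → ℝ) :
    2 * ⟪φ * v, kernelCommutator K φ v⟫_[ℝ, p] ≤ cutoffEnergy p K φ v := by
  set a : ι → ι → ℝ := fun x y => φ x * (φ x - φ y) * (v x * v y) with ha
  set e : ι → ι → ℝ := fun x y => (φ x - φ y) ^ 2 * v y ^ 2 with he
  have hinner : ⟪φ * v, kernelCommutator K φ v⟫_[ℝ, p] = ∑ x, ∑ y, p x * K x y * a x y := by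
    simp only [wInner_real_eq_sum, kernelCommutator_apply, Matrix.mulVec, dotProduct,
      Finset.mul_sum, Pi.mul_apply]
    exact Finset.sum_congr rfl fun x _ => Finset.sum_congr rfl fun y _ => by ring
  have hpointwise : 2 * (∑ x, ∑ y, p x * K x y * a x y + ∑ x, ∑ y, p x * K x y * a y x) ≤
      ∑ x, ∑ y, p x * K x y * e x y + ∑ x, ∑ y, p x * K x y * e y x := by
    simp only [← Finset.sum_add_distrib, ← mul_add, Finset.mul_sum]
    refine Finset.sum_le_sum fun x _ => Finset.sum_le_sum fun y _ => ?_
    have hxy : 2 * (a x y + a y x) ≤ e x y + e y x := by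
      simp only [ha, he]
      nlinarith [mul_nonneg (sq_nonneg (φ x - φ y)) (sq_nonneg (v x - v y))]
    linarith [mul_le_mul_of_nonneg_left hxy (mul_nonneg (h.weight_pos x).le (h.nonneg x y))]
  rw [← h.reversible.sum_sum_swap a, ← h.reversible.sum_sum_swap e] at hpointwise
  rw [hinner]
  change _ ≤ ∑ x, ∑ y, p x * K x y * e x y
  linarith

end IsLazySubMarkov

/-- The constant of the Caccioppoli inequality for walks with holding probabilities at least
`c`. -/
noncomputable def caccioppoliConst (c : ℝ) : ℝ := 2 + 2 / c

theorem caccioppoliConst_pos (hc : 0 < c) : 0 < caccioppoliConst c := by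
  unfold caccioppoliConst
  positivity

theorem IsLazySubMarkov.caccioppoli (h : IsLazySubMarkov p K c) (φ v : ι → ℝ) :
    weightedNormSq p (φ * (K *ᵥ v)) + c * dirichletForm p K (φ * v) ≤
      weightedNormSq p (φ * v) + caccioppoliConst c * cutoffEnergy p K φ v := by
  set g := φ * v with hg
  set k := kernelCommutator K φ v with hk
  have hsplit : φ * (K *ᵥ v) = K *ᵥ g + k := by
    simp only [hk, hg, kernelCommutator, add_sub_cancel]
  have hcross : 2 * ⟪K *ᵥ g, k⟫_[ℝ, p] ≤ (1 + 2 / c) * cutoffEnergy p K φ v +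
      c * dirichletForm p K g := by
    have hε := neg_two_mul_wInner_le h.weight_pos (half_pos h.holding_pos) (g - K *ᵥ g) k
    have hD := mul_le_mul_of_nonneg_left (h.weightedNormSq_sub_mulVec_le g)
      (half_pos h.holding_pos).le
    have hQ := mul_le_mul_of_nonneg_left (h.weightedNormSq_kernelCommutator_le φ v)
      (inv_pos.2 (half_pos h.holding_pos)).le
    have h1 := h.two_mul_wInner_kernelCommutator_le φ v
    rw [RCLike.wInner_sub_left] at hε
    rw [inv_div] at hε hQ
    linarith
  rw [hsplit, weightedNormSq_add, caccioppoliConst]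
  linarith [h.weightedNormSq_mulVec_le_sub g, h.weightedNormSq_kernelCommutator_le φ v]

theorem IsLazySubMarkov.cutoffEnergy_le (h : IsLazySubMarkov p K c) {φ a : ι → ℝ} (ha : 0 ≤ a)
    (hφ : ∀ x y, K x y ≠ 0 → (φ x - φ y) ^ 2 ≤ a y) (v : ι → ℝ) :
    cutoffEnergy p K φ v ≤ ∑ y, p y * (a y * v y ^ 2) :=
  calc cutoffEnergy p K φ v ≤ ∑ x, p x * (K *ᵥ fun y => a y * v y ^ 2) x := by
        simp only [cutoffEnergy, Matrix.mulVec, dotProduct, Finset.mul_sum, ← mul_assoc (p _)]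
        refine Finset.sum_le_sum fun x _ => Finset.sum_le_sum fun y _ => ?_
        rcases eq_or_ne (K x y) 0 with hxy | hxy
        · simp only [hxy, mul_zero, zero_mul, le_refl]
        · exact mul_le_mul_of_nonneg_left (mul_le_mul_of_nonneg_right (hφ x y hxy) (sq_nonneg _))
            (mul_nonneg (h.weight_pos x).le (h.nonneg x y))
    _ ≤ 1 * ∑ y, p y * (a y * v y ^ 2) :=
        h.reversible.sum_mul_mulVec_le h.weight_pos h.row_sum_le_one fun y =>
          mul_nonneg (ha y) (sq_nonneg _)
    _ = ∑ y, p y * (a y * v y ^ 2) := one_mul _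

/-- Davies' method: one step of the walk increases a weighted norm at most by the Caccioppoli
error, which the slow variation of `w` bounds by the weighted norm itself. -/
theorem IsLazySubMarkov.weightedNormSq_mul_pow_mulVec_le [DecidableEq ι]
    (h : IsLazySubMarkov p K c) {κ : ℝ} (hκ : 0 ≤ κ) {w : ι → ℝ}
    (hw : ∀ x y, K x y ≠ 0 → (w x - w y) ^ 2 ≤ κ * w y ^ 2) (v : ι → ℝ) (n : ℕ) :
    weightedNormSq p (w * (K ^ n *ᵥ v)) ≤
      (1 + caccioppoliConst c * κ) ^ n * weightedNormSq p (w * v) := by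
  have hA := (caccioppoliConst_pos h.holding_pos).le
  have hstep (u : ι → ℝ) : weightedNormSq p (w * (K *ᵥ u)) ≤
      (1 + caccioppoliConst c * κ) * weightedNormSq p (w * u) := by
    have hQ : cutoffEnergy p K w u ≤ κ * weightedNormSq p (w * u) := by
      refine (h.cutoffEnergy_le (fun y => mul_nonneg hκ (sq_nonneg (w y))) hw u).trans_eq ?_
      simp only [weightedNormSq, Finset.mul_sum, Pi.mul_apply]
      exact Finset.sum_congr rfl fun y _ => by ring
    linarith [h.caccioppoli w u, mul_nonneg h.holding_pos.le (h.dirichletForm_nonneg (w * u)),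
      mul_le_mul_of_nonneg_left hQ hA]
  induction n with
  | zero => simp only [pow_zero, Matrix.one_mulVec, one_mul, le_refl]
  | succ n ih =>
    calc weightedNormSq p (w * (K ^ (n + 1) *ᵥ v))
        = weightedNormSq p (w * (K *ᵥ (K ^ n *ᵥ v))) := by rw [Matrix.mulVec_mulVec, pow_succ']
      _ ≤ (1 + caccioppoliConst c * κ) * weightedNormSq p (w * (K ^ n *ᵥ v)) := hstep _
      _ ≤ (1 + caccioppoliConst c * κ) *
            ((1 + caccioppoliConst c * κ) ^ n * weightedNormSq p (w * v)) := by gcongr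
      _ = (1 + caccioppoliConst c * κ) ^ (n + 1) * weightedNormSq p (w * v) := by
          rw [← mul_assoc, pow_succ']

end FiniteKernels

section Truncation

variable {ι : Type*} {d u : ι → ℝ} {ρ δ θ θ' : ℝ}

/-- The cutoff function equal to `1` on `{d ≤ ρ - δ}`, to `0` on `{ρ ≤ d}`, and affine in `d` in
between. -/
noncomputable def cutoff (d : ι → ℝ) (ρ δ : ℝ) : ι → ℝ :=
  fun z => max 0 (min 1 ((ρ - d z) / δ))

/-- The part `(u - θ)⁺` of `u` above the level `θ`, the truncation used in De Giorgi's method. -/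
def excess (θ : ℝ) (u : ι → ℝ) : ι → ℝ :=
  fun z => (u z - θ)⁺

theorem excess_nonneg (θ : ℝ) (u : ι → ℝ) : 0 ≤ excess θ u :=
  fun _ => posPart_nonneg _

theorem excess_anti (hθ : θ ≤ θ') (u : ι → ℝ) : excess θ' u ≤ excess θ u :=
  fun _ => posPart_mono (sub_le_sub_left hθ _)

theorem cutoff_nonneg (d : ι → ℝ) (ρ δ : ℝ) : 0 ≤ cutoff d ρ δ :=
  fun _ => le_max_left _ _

theorem cutoff_le_one (d : ι → ℝ) (ρ δ : ℝ) : cutoff d ρ δ ≤ 1 :=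
  fun _ => max_le zero_le_one (min_le_left _ _)

theorem cutoff_eq_zero (hδ : 0 < δ) {z : ι} (hz : ρ ≤ d z) : cutoff d ρ δ z = 0 :=
  max_eq_left ((min_le_right _ _).trans
    (div_nonpos_of_nonpos_of_nonneg (sub_nonpos.2 hz) hδ.le))

theorem cutoff_eq_one (hδ : 0 < δ) {z : ι} (hz : d z + δ ≤ ρ) : cutoff d ρ δ z = 1 := by
  have h1 : 1 ≤ (ρ - d z) / δ := (one_le_div hδ).2 (by linarith)
  rw [cutoff, min_eq_left h1, max_eq_right zero_le_one]

theorem le_of_cutoff_ne_zero (hδ : 0 < δ) {z : ι} (hz : cutoff d ρ δ z ≠ 0) : d z ≤ ρ :=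
  not_lt.1 fun h => hz (cutoff_eq_zero hδ h.le)

theorem sq_cutoff_sub_le (hδ : 0 < δ) {x y : ι} (hxy : |d x - d y| ≤ 1) :
    (cutoff d ρ δ x - cutoff d ρ δ y) ^ 2 ≤ 1 / δ ^ 2 := by
  have hdiff : |cutoff d ρ δ x - cutoff d ρ δ y| ≤ 1 / δ :=
    calc |cutoff d ρ δ x - cutoff d ρ δ y|
        ≤ |(ρ - d x) / δ - (ρ - d y) / δ| := by
          refine (abs_max_sub_max_le_max _ _ _ _).trans ?_
          rw [sub_self, abs_zero, max_eq_right (abs_nonneg _)]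
          refine (abs_min_sub_min_le_max _ _ _ _).trans ?_
          rw [sub_self, abs_zero, max_eq_right (abs_nonneg _)]
      _ = |d x - d y| / δ := by
          rw [← sub_div, sub_sub_sub_cancel_left, abs_div, abs_of_pos hδ, abs_sub_comm]
      _ ≤ 1 / δ := div_le_div_of_nonneg_right hxy hδ.le
  rw [← sq_abs, ← one_div_pow]
  exact pow_le_pow_left₀ (abs_nonneg _) hdiff 2

end Truncation

section DeGiorgi

open scoped Matrix

variable {ι : Type*} [Fintype ι] {p : ι → ℝ} {K : Matrix ι ι ℝ} {c : ℝ}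
  {d u v : ι → ℝ} {ρ ρ' δ θ h : ℝ}

/-- `d` varies by at most `1` along each jump of the kernel `K`, as a graph distance does. -/
def IsOneLipschitz (K : Matrix ι ι ℝ) (d : ι → ℝ) : Prop :=
  ∀ x y, K x y ≠ 0 → |d x - d y| ≤ 1

/-- The squared `ℓ²(p)`-norm of `v` on the sublevel set `{d ≤ ρ}`. -/
noncomputable def localNormSq (p d : ι → ℝ) (ρ : ℝ) (v : ι → ℝ) : ℝ :=
  ∑ z with d z ≤ ρ, p z * v z ^ 2

/-- The Faber-Krahn inequality for `K` inside `B`: functions supported in `B` on a set of measure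
at most `ν` have spectral gap at least `Λ ν`. -/
def HasFaberKrahn (p : ι → ℝ) (K : Matrix ι ι ℝ) (B : Set ι) (Λ : ℝ → ℝ) : Prop :=
  ∀ g : ι → ℝ, (∀ z, g z ≠ 0 → z ∈ B) → ∀ ν, 0 < ν → ∑ z with g z ≠ 0, p z ≤ ν →
    Λ ν * weightedNormSq p g ≤ dirichletForm p K g

theorem IsLazySubMarkov.excess_mulVec_le (hK : IsLazySubMarkov p K c) (hθ : 0 ≤ θ) (u : ι → ℝ) :
    excess θ (K *ᵥ u) ≤ K *ᵥ excess θ u := by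
  refine fun x => sup_le ?_ (hK.mulVec_nonneg (excess_nonneg θ u) x)
  have hpt : ∑ y, K x y * u y ≤ ∑ y, (K x y * excess θ u y + K x y * θ) :=
    Finset.sum_le_sum fun y _ => by
      rw [← mul_add]
      exact mul_le_mul_of_nonneg_left (sub_le_iff_le_add.1 (le_posPart _)) (hK.nonneg x y)
  rw [Finset.sum_add_distrib, ← Finset.sum_mul] at hpt
  have hrow := mul_le_of_le_one_left hθ (hK.row_sum_le_one x)
  simp only [Matrix.mulVec, dotProduct]
  linarith

theorem localNormSq_eq_sum_ite (p d : ι → ℝ) (ρ : ℝ) (v : ι → ℝ) :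
    localNormSq p d ρ v = ∑ z, if d z ≤ ρ then p z * v z ^ 2 else 0 :=
  Finset.sum_filter _ _

theorem localNormSq_mono (hp : ∀ x, 0 < p x) (hu : 0 ≤ u) (huv : u ≤ v) :
    localNormSq p d ρ u ≤ localNormSq p d ρ v :=
  Finset.sum_le_sum fun z _ =>
    mul_le_mul_of_nonneg_left (pow_le_pow_left₀ (hu z) (huv z) 2) (hp z).le

theorem localNormSq_le_of_radius_le (hp : ∀ x, 0 < p x) (hρ : ρ ≤ ρ') (v : ι → ℝ) :
    localNormSq p d ρ v ≤ localNormSq p d ρ' v :=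
  Finset.sum_le_sum_of_subset_of_nonneg
    (Finset.monotone_filter_right _ fun _ _ hz => hz.trans hρ)
    fun z _ _ => mul_nonneg (hp z).le (sq_nonneg _)

theorem localNormSq_le_weightedNormSq_cutoff (hp : ∀ x, 0 < p x) (hδ : 0 < δ)
    (hρ : ρ' + δ ≤ ρ) (v : ι → ℝ) :
    localNormSq p d ρ' v ≤ weightedNormSq p (cutoff d ρ δ * v) := by
  rw [localNormSq_eq_sum_ite]
  refine Finset.sum_le_sum fun z _ => ?_
  split_ifs with hz
  · rw [Pi.mul_apply, cutoff_eq_one hδ (by linarith), one_mul]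
  · exact mul_nonneg (hp z).le (sq_nonneg _)

theorem weightedNormSq_cutoff_le_localNormSq (hp : ∀ x, 0 < p x) (hδ : 0 < δ) (v : ι → ℝ) :
    weightedNormSq p (cutoff d ρ δ * v) ≤ localNormSq p d ρ v := by
  rw [localNormSq_eq_sum_ite]
  refine Finset.sum_le_sum fun z _ => ?_
  rw [Pi.mul_apply, mul_pow]
  split_ifs with hz
  · exact mul_le_mul_of_nonneg_left (mul_le_of_le_one_left (sq_nonneg _)
      (pow_le_one₀ (cutoff_nonneg d ρ δ z) (cutoff_le_one d ρ δ z))) (hp z).le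
  · rw [cutoff_eq_zero hδ (not_le.1 hz).le, zero_pow two_ne_zero, zero_mul, mul_zero]

theorem IsLazySubMarkov.cutoffEnergy_cutoff_le (hK : IsLazySubMarkov p K c)
    (hd : IsOneLipschitz K d) (hδ : 0 < δ) (v : ι → ℝ) :
    cutoffEnergy p K (cutoff d (ρ - 1) δ) v ≤ 1 / δ ^ 2 * localNormSq p d ρ v := by
  refine (hK.cutoffEnergy_le (a := fun y => if d y ≤ ρ then 1 / δ ^ 2 else 0)
    (fun y => ?_) (fun x y hxy => ?_) v).trans_eq ?_
  · dsimp only [Pi.zero_apply]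
    split_ifs <;> positivity
  · split_ifs with hy
    · exact sq_cutoff_sub_le hδ (hd x y hxy)
    · have hx := (abs_le.1 (hd x y hxy)).1
      rw [cutoff_eq_zero hδ (by linarith), cutoff_eq_zero hδ (by linarith), sub_self,
        zero_pow two_ne_zero]
  · rw [localNormSq_eq_sum_ite, Finset.mul_sum]
    exact Finset.sum_congr rfl fun y _ => by split_ifs <;> ring

/-- Chebyshev's inequality for the support of the truncation at a higher level. -/
theorem sum_support_excess_mul_sq_le (hp : ∀ x, 0 < p x) (hh : 0 ≤ h) {φ : ι → ℝ}
    (hφ : ∀ z, φ z ≠ 0 → d z ≤ ρ) (u : ι → ℝ) :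
    (∑ z with (φ * excess (θ + h) u) z ≠ 0, p z) * h ^ 2 ≤ localNormSq p d ρ (excess θ u) := by
  rw [Finset.sum_mul]
  refine (Finset.sum_le_sum fun z hz => ?_).trans
    (Finset.sum_le_sum_of_subset_of_nonneg (fun z hz => ?_) fun z _ _ =>
      mul_nonneg (hp z).le (sq_nonneg (excess θ u z)))
  · have hz' : excess (θ + h) u z ≠ 0 := right_ne_zero_of_mul (Finset.mem_filter.1 hz).2
    have hlevel : 0 < u z - (θ + h) :=
      not_le.1 fun hle => hz' (posPart_eq_zero.2 hle)
    exact mul_le_mul_of_nonneg_left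
      (pow_le_pow_left₀ hh (le_trans (by linarith) (le_posPart (u z - θ))) 2) (hp z).le
  · exact Finset.mem_filter.2
      ⟨Finset.mem_univ z, hφ z (left_ne_zero_of_mul (Finset.mem_filter.1 hz).2)⟩

theorem IsLazySubMarkov.weightedNormSq_cutoff_mul_excess_mulVec_le
    (hK : IsLazySubMarkov p K c) (hd : IsOneLipschitz K d) (hδ : 0 < δ) (hθ : 0 ≤ θ)
    (u : ι → ℝ) :
    weightedNormSq p (cutoff d (ρ - 1) δ * excess θ (K *ᵥ u)) +
        c * dirichletForm p K (cutoff d (ρ - 1) δ * excess θ u) ≤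
      weightedNormSq p (cutoff d (ρ - 1) δ * excess θ u) +
        caccioppoliConst c * (1 / δ ^ 2 * localNormSq p d ρ (excess θ u)) := by
  have hφ := cutoff_nonneg d (ρ - 1) δ
  have hmono : weightedNormSq p (cutoff d (ρ - 1) δ * excess θ (K *ᵥ u)) ≤
      weightedNormSq p (cutoff d (ρ - 1) δ * (K *ᵥ excess θ u)) :=
    weightedNormSq_mono hK.weight_pos (mul_nonneg hφ (excess_nonneg _ _))
      (mul_le_mul_of_nonneg_left (hK.excess_mulVec_le hθ u) hφ)
  have hQ := mul_le_mul_of_nonneg_left (hK.cutoffEnergy_cutoff_le (ρ := ρ) hd hδ (excess θ u))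
    (caccioppoliConst_pos hK.holding_pos).le
  linarith [hK.caccioppoli (cutoff d (ρ - 1) δ) (excess θ u)]

theorem HasFaberKrahn.mul_weightedNormSq_cutoff_mul_excess_le {R ν : ℝ} {Λ : ℝ → ℝ}
    (hFK : HasFaberKrahn p K {z | d z ≤ R} Λ) (hp : ∀ x, 0 < p x) (hν : 0 < ν) (hδ : 0 < δ)
    (hρR : ρ ≤ R) (hh : 0 < h) (hu : localNormSq p d ρ (excess θ u) ≤ ν * h ^ 2) :
    Λ ν * weightedNormSq p (cutoff d ρ δ * excess (θ + h) u) ≤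
      dirichletForm p K (cutoff d ρ δ * excess (θ + h) u) := by
  refine hFK _ (fun z hz => ?_) ν hν ?_
  · exact (le_of_cutoff_ne_zero hδ (left_ne_zero_of_mul hz)).trans hρR
  · refine le_of_mul_le_mul_right ?_ (pow_pos hh 2)
    exact (sum_support_excess_mul_sq_le hp hh.le (fun z hz => le_of_cutoff_ne_zero hδ hz) u).trans
      hu

theorem HasFaberKrahn.weightedNormSq_cutoff_mul_excess_mulVec_le {R ν Y : ℝ} {Λ : ℝ → ℝ}
    (hFK : HasFaberKrahn p K {z | d z ≤ R} Λ) (hK : IsLazySubMarkov p K c)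
    (hd : IsOneLipschitz K d) (hν : 0 < ν) (hδ : 0 < δ) (hρR : ρ ≤ R) (hθ : 0 ≤ θ) (hh : 0 < h)
    (hYν : Y ≤ ν * h ^ 2) (hY : localNormSq p d ρ (excess θ u) ≤ Y) :
    weightedNormSq p (cutoff d (ρ - 1) δ * excess (θ + h) (K *ᵥ u)) ≤
      (1 - c * Λ ν) * weightedNormSq p (cutoff d (ρ - 1) δ * excess (θ + h) u) +
        caccioppoliConst c * (1 / δ ^ 2 * Y) := by
  have hp := hK.weight_pos
  have hA := (caccioppoliConst_pos hK.holding_pos).le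
  have hhigh : localNormSq p d ρ (excess (θ + h) u) ≤ Y :=
    (localNormSq_mono hp (excess_nonneg _ _) (excess_anti (by linarith) _)).trans hY
  have hone := hK.weightedNormSq_cutoff_mul_excess_mulVec_le (ρ := ρ) hd hδ
    (add_nonneg hθ hh.le) u
  have hgap := mul_le_mul_of_nonneg_left (hFK.mul_weightedNormSq_cutoff_mul_excess_le hp hν hδ
    (by linarith) hh ((localNormSq_le_of_radius_le hp (sub_le_self ρ zero_le_one) _).trans
      (hY.trans hYν))) hK.holding_pos.le
  have herr := mul_le_mul_of_nonneg_left
    (mul_le_mul_of_nonneg_left hhigh (show 0 ≤ 1 / δ ^ 2 by positivity)) hA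
  linarith

/-- By Bernoulli's inequality `(1 - β) ^ J ≤ 1 / (1 + J β)`. -/
theorem le_div_add_div_of_succ_le {y : ℕ → ℝ} {β ε Y : ℝ} (hβ : 0 < β) (hβ1 : β ≤ 1)
    (hε : 0 ≤ ε) (hY : 0 ≤ Y) (h0 : y 0 ≤ Y) {J : ℕ}
    (hrec : ∀ j < J, y (j + 1) ≤ (1 - β) * y j + ε) :
    y J ≤ Y / (1 + J * β) + ε / β := by
  have hgeom : ∀ j ≤ J, y j ≤ (1 - β) ^ j * Y + ε / β := by
    intro j
    induction j with
    | zero =>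
      intro _
      rw [pow_zero, one_mul]
      exact h0.trans (le_add_of_nonneg_right (by positivity))
    | succ j ih =>
      intro hj
      calc y (j + 1) ≤ (1 - β) * y j + ε := hrec j hj
        _ ≤ (1 - β) * ((1 - β) ^ j * Y + ε / β) + ε :=
            add_le_add_left (mul_le_mul_of_nonneg_left (ih (by lia)) (sub_nonneg.2 hβ1)) ε
        _ = (1 - β) ^ (j + 1) * Y + ε / β := by
            field_simp
            ring
  have hbernoulli : (1 - β) ^ J * (1 + J * β) ≤ 1 :=
    calc (1 - β) ^ J * (1 + J * β) ≤ (1 - β) ^ J * (1 + β) ^ J :=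
          mul_le_mul_of_nonneg_left (one_add_mul_le_pow (by linarith) J)
            (pow_nonneg (sub_nonneg.2 hβ1) J)
      _ = (1 - β ^ 2) ^ J := by rw [← mul_pow]; congr 1; ring
      _ ≤ 1 := pow_le_one₀ (by nlinarith) (by nlinarith)
  refine (hgeom J le_rfl).trans (add_le_add_left ?_ _)
  rw [le_div_iff₀ (by positivity), mul_right_comm]
  exact mul_le_of_le_one_left hY hbernoulli

/-- One step of De Giorgi's iteration. -/
theorem HasFaberKrahn.localNormSq_excess_add_le [DecidableEq ι] {R ν Y : ℝ} {Λ : ℝ → ℝ}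
    (hFK : HasFaberKrahn p K {z | d z ≤ R} Λ) (hK : IsLazySubMarkov p K c)
    (hd : IsOneLipschitz K d) (hν : 0 < ν) (hΛ : 0 < Λ ν) (hδ : 0 < δ) (hρR : ρ ≤ R)
    (hρ : ρ' + δ ≤ ρ - 1) (hθ : 0 ≤ θ) (hh : 0 < h) (hYν : Y ≤ ν * h ^ 2) {J : ℕ}
    (hY : ∀ j ≤ J, localNormSq p d ρ (excess θ (K ^ j *ᵥ u)) ≤ Y) :
    localNormSq p d ρ' (excess (θ + h) (K ^ J *ᵥ u)) ≤
      Y / (1 + J * (c * Λ ν)) + caccioppoliConst c * (1 / δ ^ 2 * Y) / (c * Λ ν) := by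
  have hp := hK.weight_pos
  have hA := caccioppoliConst_pos hK.holding_pos
  set g : ℕ → ι → ℝ := fun j => cutoff d (ρ - 1) δ * excess (θ + h) (K ^ j *ᵥ u)
  have hρ1 : ρ - 1 ≤ ρ := sub_le_self ρ zero_le_one
  have hg0 : weightedNormSq p (g 0) ≤ Y :=
    calc weightedNormSq p (g 0)
        ≤ localNormSq p d (ρ - 1) (excess (θ + h) (K ^ 0 *ᵥ u)) :=
          weightedNormSq_cutoff_le_localNormSq hp hδ _
      _ ≤ localNormSq p d (ρ - 1) (excess θ (K ^ 0 *ᵥ u)) :=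
          localNormSq_mono hp (excess_nonneg _ _) (excess_anti (by linarith) _)
      _ ≤ Y := (localNormSq_le_of_radius_le hp hρ1 _).trans (hY 0 J.zero_le)
  have hY0 : 0 ≤ Y := (weightedNormSq_nonneg hp (g 0)).trans hg0
  refine (localNormSq_le_weightedNormSq_cutoff hp hδ hρ _).trans ?_
  have hβ : 0 < c * Λ ν := mul_pos hK.holding_pos hΛ
  rcases le_or_gt (c * Λ ν) 1 with hβ1 | hβ1
  · refine le_div_add_div_of_succ_le (y := fun j => weightedNormSq p (g j)) hβ hβ1
      (by positivity) hY0 hg0 fun j hj => ?_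
    have hone := hFK.weightedNormSq_cutoff_mul_excess_mulVec_le hK hd hν hδ hρR hθ hh hYν
      (hY j hj.le)
    rwa [Matrix.mulVec_mulVec, ← pow_succ'] at hone
  · have hgap := mul_le_mul_of_nonneg_left (hFK.mul_weightedNormSq_cutoff_mul_excess_le hp hν hδ
      (by linarith) hh ((localNormSq_le_of_radius_le hp hρ1 _).trans ((hY J le_rfl).trans hYν)))
      hK.holding_pos.le
    have hzero : weightedNormSq p (g J) ≤ 0 := by
      nlinarith [hK.weightedNormSq_mulVec_le_sub (g J), weightedNormSq_nonneg hp (K *ᵥ g J),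
        weightedNormSq_nonneg hp (g J)]
    exact hzero.trans (by positivity)

end DeGiorgi

section MeanValue

open scoped Matrix

variable {ι : Type*} [Fintype ι] {p : ι → ℝ} {K : Matrix ι ι ℝ} {c : ℝ}
  {d u : ι → ℝ} {C F α R θ P Y : ℝ} {t : ℕ}

/-- The Faber-Krahn profile `ν ↦ (C / R²) (F / ν) ^ α`. -/
noncomputable def powerProfile (C F α R ν : ℝ) : ℝ := C / R ^ 2 * (F / ν) ^ α

/-- The bound `Y` on the iterate of De Giorgi's method at the scale `P ≥ 1`: it concerns the times
in `[t (1 - 1 / P), t]`, the set `{d ≤ R / 2 + R / (2 P)}` and the part of `K ^ s u` above the level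
`θ (1 - 1 / P)`. -/
def ExcessBound [DecidableEq ι] (p : ι → ℝ) (K : Matrix ι ι ℝ) (d u : ι → ℝ) (R θ : ℝ) (t : ℕ)
    (P Y : ℝ) : Prop :=
  ∀ s : ℕ, s ≤ t → t * (1 - 1 / P) ≤ s →
    localNormSq p d (R / 2 + R / (2 * P)) (excess (θ * (1 - 1 / P)) (K ^ s *ᵥ u)) ≤ Y

/-- The factor by which the bound decreases when the scale of De Giorgi's iteration doubles. -/
noncomputable def decayRatio (α : ℝ) : ℝ := 4 ^ (1 + 1 / α)

/-- The fraction `η` such that De Giorgi's iteration converges when its starting bound is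
`η F θ²`. -/
noncomputable def startFraction (c C α : ℝ) : ℝ :=
  (c * C / (decayRatio α * (12 + 64 * caccioppoliConst c))) ^ (1 / α) / 4

theorem decayRatio_pos (α : ℝ) : 0 < decayRatio α :=
  Real.rpow_pos_of_pos four_pos _

theorem decayRatio_rpow (hα : 0 < α) : decayRatio α ^ α = 4 * 4 ^ α := by
  rw [decayRatio, ← Real.rpow_mul zero_le_four, add_mul, one_div_mul_cancel hα.ne', one_mul,
    add_comm, Real.rpow_add four_pos, Real.rpow_one]

theorem startFraction_pos (hc : 0 < c) (hC : 0 < C) : 0 < startFraction c C α := by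
  have hq := decayRatio_pos α
  have hA := caccioppoliConst_pos hc
  unfold startFraction
  positivity

theorem four_mul_startFraction_rpow (hc : 0 < c) (hC : 0 < C) (hα : 0 < α) :
    (4 * startFraction c C α) ^ α =
      c * C / (decayRatio α * (12 + 64 * caccioppoliConst c)) := by
  have hq := decayRatio_pos α
  have hA := caccioppoliConst_pos hc
  rw [startFraction, mul_div_cancel₀ _ four_ne_zero, ← Real.rpow_mul (by positivity),
    one_div_mul_cancel hα.ne', Real.rpow_one]

theorem sixtyFour_mul_startFraction_rpow_le (hc : 0 < c) (hc1 : c ≤ 1) (hC : 0 < C)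
    (hα : 0 < α) : 64 * startFraction c C α ^ α ≤ C := by
  have hη := startFraction_pos (α := α) hc hC
  have hA := caccioppoliConst_pos hc
  have hq : 1 ≤ decayRatio α :=
    Real.one_le_rpow (by norm_num) (by positivity)
  have hle : startFraction c C α ^ α ≤ (4 * startFraction c C α) ^ α :=
    Real.rpow_le_rpow hη.le (by linarith) hα.le
  rw [four_mul_startFraction_rpow hc hC hα] at hle
  calc 64 * startFraction c C α ^ α
      ≤ 64 * (c * C / (decayRatio α * (12 + 64 * caccioppoliConst c))) := by gcongr
    _ ≤ C := by
      have hden : c * 64 ≤ decayRatio α * (12 + 64 * caccioppoliConst c) := by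
        have hA2 : 2 ≤ caccioppoliConst c := le_add_of_nonneg_right (by positivity)
        nlinarith
      rw [← mul_div_assoc, div_le_iff₀ (by positivity)]
      linarith [mul_le_mul_of_nonneg_left hden hC.le]

/-- The decay ratio and the starting fraction solve this equation, which makes the bounds
`η F θ² / q ^ k` reproduce themselves in the iteration. -/
theorem decayRatio_mul_pow_eq (hc : 0 < c) (hC : 0 < C) (hα : 0 < α) (k : ℕ) :
    decayRatio α * ((12 + 64 * caccioppoliConst c) * 4 ^ k) =
      c * (C * (decayRatio α ^ k / (4 ^ (k + 1) * startFraction c C α)) ^ α) := by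
  have hη := startFraction_pos (α := α) hc hC
  have hq := decayRatio_pos α
  have hA := caccioppoliConst_pos hc
  have hpow : (decayRatio α ^ k / (4 ^ (k + 1) * startFraction c C α)) ^ α =
      4 ^ k / (4 * startFraction c C α) ^ α := by
    rw [pow_succ, mul_assoc, Real.div_rpow (by positivity) (by positivity),
      Real.mul_rpow (by positivity) (by positivity), ← Real.rpow_pow_comm hq.le,
      decayRatio_rpow hα, ← Real.rpow_pow_comm zero_le_four, mul_pow]
    field_simp
  rw [hpow, four_mul_startFraction_rpow hc hC hα]
  field_simp

theorem exists_add_eq_of_mul_one_sub_le (hP : 1 ≤ P) (htP : 4 * P ≤ t) {s : ℕ}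
    (hs : t * (1 - 1 / (2 * P)) ≤ s) :
    ∃ s₀ J : ℕ, s₀ + J = s ∧ t * (1 - 1 / P) ≤ s₀ ∧ t / (4 * P) ≤ J := by
  have hP0 : 0 < P := one_pos.trans_le hP
  have hnonneg : 0 ≤ t * (1 - 1 / P) :=
    mul_nonneg t.cast_nonneg (sub_nonneg.2 ((div_le_one hP0).2 hP))
  have hceil := Nat.ceil_lt_add_one hnonneg
  have hgap : t * (1 - 1 / (2 * P)) = t * (1 - 1 / P) + 2 * (t / (4 * P)) := by
    field_simp
    ring
  have hone : 1 ≤ t / (4 * P) := (one_le_div (by positivity)).2 htP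
  have hle : ⌈t * (1 - 1 / P)⌉₊ ≤ s := by
    rw [← Nat.cast_le (α := ℝ)]
    linarith
  refine ⟨⌈t * (1 - 1 / P)⌉₊, s - ⌈t * (1 - 1 / P)⌉₊, Nat.add_sub_of_le hle, Nat.le_ceil _, ?_⟩
  rw [Nat.cast_sub hle]
  linarith

theorem deGiorgi_error_le {A β : ℝ} {J : ℕ} (hβ : 0 < β) (hR : 0 < R)
    (hP : 1 ≤ P) (hY : 0 ≤ Y) (hRt : R ^ 2 ≤ 3 * t) (hJ : t / (4 * P) ≤ J) :
    Y / (1 + J * β) + A * (1 / (R / (8 * P)) ^ 2 * Y) / β ≤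
      Y * ((12 + 64 * A) * P ^ 2 / (R ^ 2 * β)) := by
  have hP0 : 0 < P := one_pos.trans_le hP
  have htime : R ^ 2 * β ≤ 12 * P ^ 2 * (1 + J * β) := by
    rw [div_le_iff₀ (by positivity)] at hJ
    have hRJ : R ^ 2 ≤ 12 * P ^ 2 * J := by
      nlinarith [mul_le_mul_of_nonneg_right hP (mul_nonneg hP0.le J.cast_nonneg)]
    nlinarith [mul_le_mul_of_nonneg_right hRJ hβ.le]
  have hfirst : Y / (1 + J * β) ≤ Y * (12 * P ^ 2 / (R ^ 2 * β)) := by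
    rw [div_le_iff₀ (by positivity), mul_assoc, div_mul_eq_mul_div]
    exact le_mul_of_one_le_right hY ((one_le_div (by positivity)).2 htime)
  have hsecond : A * (1 / (R / (8 * P)) ^ 2 * Y) / β = Y * (64 * A * P ^ 2 / (R ^ 2 * β)) := by
    field_simp
    ring
  rw [hsecond, add_mul, add_div, mul_add]
  exact add_le_add_left hfirst _

/-- One doubling of the scale: De Giorgi's step with level increment `θ / (2 P)`, cutoff width
`R / (8 P)` and at least `t / (4 P)` time steps. -/
theorem ExcessBound.two_mul [DecidableEq ι] {Λ : ℝ → ℝ} (hb : ExcessBound p K d u R θ t P Y)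
    (hK : IsLazySubMarkov p K c) (hd : IsOneLipschitz K d)
    (hFK : HasFaberKrahn p K {z | d z ≤ R} Λ) (hP : 1 ≤ P) (hPR : 8 * P ≤ R)
    (hRt : R ^ 2 ≤ 3 * t) (hθ : 0 < θ) (hY : 0 < Y) (hΛ : 0 < Λ (Y / (θ / (2 * P)) ^ 2)) :
    ExcessBound p K d u R θ t (2 * P)
      (Y * ((12 + 64 * caccioppoliConst c) * P ^ 2 /
        (R ^ 2 * (c * Λ (Y / (θ / (2 * P)) ^ 2))))) := by
  intro s hst hs
  have hP0 : 0 < P := one_pos.trans_le hP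
  have hR0 : 0 < R := by linarith
  have hβ := mul_pos hK.holding_pos hΛ
  obtain ⟨s₀, J, rfl, hs₀, hJ⟩ := exists_add_eq_of_mul_one_sub_le (t := t) hP (by nlinarith) hs
  have hlevel : θ * (1 - 1 / P) + θ / (2 * P) = θ * (1 - 1 / (2 * P)) := by
    field_simp
    ring
  have hradius : R / 2 + R / (2 * P) ≤ R := by
    have hhalf := div_le_div_of_nonneg_left hR0.le two_pos (le_mul_of_one_le_right zero_le_two hP)
    linarith
  have hwidth : R / 2 + R / (2 * (2 * P)) + R / (8 * P) ≤ R / 2 + R / (2 * P) - 1 := by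
    have hone : 1 ≤ R / (8 * P) := (one_le_div (by positivity)).2 hPR
    have hsum : R / (2 * P) = R / (2 * (2 * P)) + 2 * (R / (8 * P)) := by
      field_simp
      ring
    linarith
  have hstep := hFK.localNormSq_excess_add_le (u := K ^ s₀ *ᵥ u) (J := J) hK hd (by positivity) hΛ
    (by positivity) hradius hwidth
    (mul_nonneg hθ.le (sub_nonneg.2 ((div_le_one hP0).2 hP))) (by positivity)
    (div_mul_cancel₀ Y (by positivity)).ge fun j hj => by
      rw [Matrix.mulVec_mulVec, ← pow_add]
      exact hb _ (by lia) (hs₀.trans (by gcongr; lia))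
  rw [hlevel, Matrix.mulVec_mulVec, ← pow_add, add_comm J] at hstep
  exact hstep.trans (deGiorgi_error_le hβ hR0 hP hY.le hRt hJ)

theorem excessBound_one [DecidableEq ι] (hp : ∀ x, 0 < p x)
    (hM : ∀ s ≤ t, localNormSq p d R (K ^ s *ᵥ u) ≤ Y) : ExcessBound p K d u R θ t 1 Y := by
  intro s hs _
  have hR : R / 2 + R / (2 * 1) = R := by ring
  rw [hR, div_one, sub_self, mul_zero]
  refine le_trans (Finset.sum_le_sum fun z _ => mul_le_mul_of_nonneg_left ?_ (hp z).le) (hM s hs)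
  rw [← sq_abs ((K ^ s *ᵥ u) z)]
  exact pow_le_pow_left₀ (posPart_nonneg _)
    (sup_le ((sub_zero _).trans_le (le_abs_self _)) (abs_nonneg _)) 2

/-- De Giorgi's iteration, run as long as the width of the cutoffs exceeds the range `1` of the
walk. -/
theorem excessBound_two_pow [DecidableEq ι] (hK : IsLazySubMarkov p K c) (hd : IsOneLipschitz K d)
    (hFK : HasFaberKrahn p K {z | d z ≤ R} (powerProfile C F α R)) (hC : 0 < C) (hα : 0 < α)
    (hF : 0 < F) (hRt : 8 ≤ R → R ^ 2 ≤ 3 * t) (hθ : 0 < θ)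
    (hM : ∀ s ≤ t, localNormSq p d R (K ^ s *ᵥ u) ≤ startFraction c C α * F * θ ^ 2) {k : ℕ}
    (hk : ∀ j < k, 2 ^ (j + 3) ≤ R) :
    ExcessBound p K d u R θ t (2 ^ k) (startFraction c C α * F * θ ^ 2 / decayRatio α ^ k) := by
  have hc := hK.holding_pos
  have hη := startFraction_pos (α := α) hc hC
  have hq := decayRatio_pos α
  induction k with
  | zero => simpa only [pow_zero, div_one] using excessBound_one hK.weight_pos hM
  | succ k ih =>
    have hP : (1 : ℝ) ≤ 2 ^ k := one_le_pow₀ one_le_two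
    have hPR : 8 * 2 ^ k ≤ R := by
      have := hk k k.lt_succ_self
      rw [pow_add] at this
      linarith
    have hR0 : 0 < R := by linarith
    set Y := startFraction c C α * F * θ ^ 2 / decayRatio α ^ k with hY
    have hFν : F / (Y / (θ / (2 * 2 ^ k)) ^ 2) =
        decayRatio α ^ k / (4 ^ (k + 1) * startFraction c C α) := by
      rw [hY, pow_succ (4 : ℝ), show (4 : ℝ) = 2 ^ 2 by norm_num, ← pow_mul, mul_comm 2 k, pow_mul]
      field_simp
    have hdouble := (ih fun j hj => hk j (hj.trans k.lt_succ_self)).two_mul hK hd hFK hP hPR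
      (hRt (by linarith)) hθ (by positivity) (by unfold powerProfile; positivity)
    have hratio : (12 + 64 * caccioppoliConst c) * (2 ^ k) ^ 2 /
        (R ^ 2 * (c * powerProfile C F α R (Y / (θ / (2 * 2 ^ k)) ^ 2))) = 1 / decayRatio α := by
      have hfix := decayRatio_mul_pow_eq (α := α) hc hC hα k
      rw [powerProfile, hFν, div_eq_div_iff (by positivity) hq.ne', one_mul,
        ← pow_mul, mul_comm k 2, pow_mul]
      norm_num only
      rw [mul_comm, hfix]
      field_simp
    rw [hratio, ← pow_succ', mul_one_div, hY, div_div, ← pow_succ] at hdouble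
    exact hdouble

theorem HasFaberKrahn.apply_weight_le_one {B : Set ι} {Λ : ℝ → ℝ}
    (hFK : HasFaberKrahn p K B Λ) (hK : IsLazySubMarkov p K c) {x : ι} (hx : x ∈ B) :
    Λ (p x) ≤ 1 := by
  classical
  have hp := hK.weight_pos x
  have hsupp (z : ι) : (Pi.single x 1 : ι → ℝ) z ≠ 0 ↔ z = x := by
    rw [Pi.single_apply, ne_eq, ite_eq_right_iff, Classical.not_imp]
    exact and_iff_left one_ne_zero
  have hnorm : weightedNormSq p (Pi.single x 1) = p x := by
    simp only [weightedNormSq, Pi.single_apply, ite_pow, one_pow, ne_eq, OfNat.ofNat_ne_zero,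
      not_false_eq_true, zero_pow, mul_ite, mul_one, mul_zero, Finset.sum_ite_eq', Finset.mem_univ,
      if_true]
  have hweight : ∑ z with (Pi.single x 1 : ι → ℝ) z ≠ 0, p z = p x := by
    refine (Finset.sum_congr (Finset.ext fun z => ?_) fun _ _ => rfl).trans
      (Finset.sum_singleton p x)
    rw [Finset.mem_filter, Finset.mem_singleton, hsupp]
    exact and_iff_right (Finset.mem_univ z)
  have hgap := (hFK (Pi.single x 1) (fun z hz => (hsupp z).1 hz ▸ hx) (p x) hp hweight.le).trans
    (hK.dirichletForm_le_of_nonneg (Pi.single_nonneg.2 zero_le_one))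
  rw [hnorm] at hgap
  exact (mul_le_iff_le_one_left hp).1 hgap

/-- The Faber-Krahn inequality for the indicator function of `x`. -/
theorem startFraction_mul_le_weight (hK : IsLazySubMarkov p K c)
    (hFK : HasFaberKrahn p K {z | d z ≤ R} (powerProfile C F α R)) (hC : 0 < C) (hα : 0 < α)
    (hF : 0 < F) (hR : 0 < R) {x : ι} (hx : d x ≤ R) {k : ℕ} (hk : R ≤ 2 ^ (k + 3)) :
    startFraction c C α * F ≤ decayRatio α ^ k * p x := by
  have hp := hK.weight_pos x
  have hη := startFraction_pos (α := α) hK.holding_pos hC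
  have hq := decayRatio_pos α
  have hvol : C * (F / p x) ^ α ≤ R ^ 2 := by
    have := hFK.apply_weight_le_one hK hx
    rwa [powerProfile, div_mul_eq_mul_div, div_le_one (by positivity)] at this
  have hR2 : R ^ 2 ≤ 64 * 4 ^ k :=
    calc R ^ 2 ≤ (2 ^ (k + 3)) ^ 2 := by gcongr
      _ = 64 * 4 ^ k := by
        rw [← pow_mul, mul_comm, pow_mul, pow_add]
        norm_num [mul_comm]
  have hpow : (startFraction c C α * F / p x) ^ α ≤ (decayRatio α ^ k) ^ α := by
    rw [mul_div_assoc, Real.mul_rpow hη.le (by positivity), ← Real.rpow_pow_comm hq.le,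
      decayRatio_rpow hα, mul_pow]
    have hη64 := mul_le_mul_of_nonneg_right
      (sixtyFour_mul_startFraction_rpow_le hK.holding_pos (hK.holding_le_one x) hC hα)
      (show 0 ≤ (F / p x) ^ α by positivity)
    have h4 : (1 : ℝ) ≤ (4 ^ α) ^ k :=
      one_le_pow₀ (Real.one_le_rpow (by norm_num) hα.le)
    nlinarith [mul_le_mul_of_nonneg_left h4 (show (0 : ℝ) ≤ 4 ^ k by positivity)]
  rw [← div_le_iff₀ hp]
  exact (Real.rpow_le_rpow_iff (by positivity) (by positivity) hα).1 hpow

/-- The mean value inequality of De Giorgi and Moser. -/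
theorem pow_mulVec_apply_le_of_localNormSq_le [DecidableEq ι] (hK : IsLazySubMarkov p K c)
    (hd : IsOneLipschitz K d)
    (hFK : HasFaberKrahn p K {z | d z ≤ R} (powerProfile C F α R)) (hC : 0 < C) (hα : 0 < α)
    (hF : 0 < F) (hR : 0 < R) (hRt : 8 ≤ R → R ^ 2 ≤ 3 * t) (hθ : 0 < θ)
    (hM : ∀ s ≤ t, localNormSq p d R (K ^ s *ᵥ u) ≤ startFraction c C α * F * θ ^ 2)
    {x : ι} (hx : d x ≤ 0) : (K ^ t *ᵥ u) x ≤ 2 * θ := by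
  have hex : ∃ k : ℕ, R < 2 ^ (k + 3) :=
    (pow_unbounded_of_one_lt R one_lt_two).imp fun k hk =>
      hk.trans_le (pow_le_pow_right₀ one_le_two (k.le_add_right 3))
  classical
  set k := Nat.find hex
  have hp := hK.weight_pos x
  have hq := decayRatio_pos α
  have hinv : 0 ≤ (1 : ℝ) / 2 ^ k := by positivity
  have hbound := excessBound_two_pow hK hd hFK hC hα hF hRt hθ hM
    (fun j hj => not_lt.1 (Nat.find_min hex hj)) t le_rfl
    (mul_le_of_le_one_right t.cast_nonneg (sub_le_self 1 hinv))
  set w := excess (θ * (1 - 1 / 2 ^ k)) (K ^ t *ᵥ u)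
  have hpoint : p x * w x ^ 2 ≤ p x * θ ^ 2 :=
    calc p x * w x ^ 2 ≤ localNormSq p d (R / 2 + R / (2 * 2 ^ k)) w :=
          Finset.single_le_sum (f := fun z => p z * w z ^ 2)
            (fun z _ => mul_nonneg (hK.weight_pos z).le (sq_nonneg _))
            (Finset.mem_filter.2 ⟨Finset.mem_univ x, hx.trans (by positivity)⟩)
      _ ≤ startFraction c C α * F * θ ^ 2 / decayRatio α ^ k := hbound
      _ ≤ p x * θ ^ 2 := by
        have hstart := startFraction_mul_le_weight hK hFK hC hα hF hR (hx.trans hR.le)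
          (Nat.find_spec hex).le
        rw [div_le_iff₀ (by positivity)]
        linarith [mul_le_mul_of_nonneg_right hstart (sq_nonneg θ)]
  have hw : w x ≤ θ := (pow_le_pow_iff_left₀ (excess_nonneg _ _ x) hθ.le two_ne_zero).1
    (le_of_mul_le_mul_left hpoint hp)
  have hlevel : (K ^ t *ᵥ u) x - θ * (1 - 1 / 2 ^ k) ≤ w x := le_posPart _
  nlinarith

end MeanValue

section DaviesWeight

variable {ι : Type*} {d d' : ι → ℝ} {l R D : ℝ} {x y : ι}

/-- The weight of Davies' method: `1` on `{d ≤ R}` and decaying with rate `l` outside. -/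
noncomputable def daviesWeight (d : ι → ℝ) (R l : ℝ) : ι → ℝ :=
  fun z => Real.exp (-(l * max (d z - R) 0))

theorem daviesWeight_pos (d : ι → ℝ) (R l : ℝ) (z : ι) : 0 < daviesWeight d R l z :=
  Real.exp_pos _

theorem daviesWeight_eq_one {z : ι} (hz : d z ≤ R) : daviesWeight d R l z = 1 := by
  rw [daviesWeight, max_eq_right (sub_nonpos.2 hz), mul_zero, neg_zero, Real.exp_zero]

theorem sq_daviesWeight_sub_le (hl0 : 0 ≤ l) (hl1 : l ≤ 1) (hxy : |d x - d y| ≤ 1) :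
    (daviesWeight d R l x - daviesWeight d R l y) ^ 2 ≤ 4 * l ^ 2 * daviesWeight d R l y ^ 2 := by
  set s := l * (max (d y - R) 0 - max (d x - R) 0) with hs
  have hsl : |s| ≤ l := by
    rw [hs, abs_mul, abs_of_nonneg hl0]
    refine mul_le_of_le_one_right hl0 ((abs_max_sub_max_le_abs _ _ _).trans ?_)
    rwa [sub_sub_sub_cancel_right, abs_sub_comm]
  have hexp : |Real.exp s - 1| ≤ 2 * l := by
    linarith [Real.abs_exp_sub_one_le (hsl.trans hl1)]
  have hfactor : daviesWeight d R l x - daviesWeight d R l y =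
      (Real.exp s - 1) * daviesWeight d R l y := by
    rw [sub_mul, one_mul, daviesWeight, daviesWeight, ← Real.exp_add, hs]
    ring_nf
  rw [hfactor, mul_pow, ← sq_abs (Real.exp s - 1)]
  refine mul_le_mul_of_nonneg_right ?_ (sq_nonneg _)
  calc |Real.exp s - 1| ^ 2 ≤ (2 * l) ^ 2 := pow_le_pow_left₀ (abs_nonneg _) hexp 2
    _ = 4 * l ^ 2 := by ring

theorem daviesWeight_mul_le (hl : 0 ≤ l) {z : ι} (hD : D ≤ d z + d' z) :
    daviesWeight d R l z * daviesWeight d' R l z ≤ Real.exp (-(l * (D - 2 * R))) := by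
  rw [daviesWeight, daviesWeight, ← Real.exp_add, ← neg_add, ← mul_add]
  refine Real.exp_le_exp.2 (neg_le_neg (mul_le_mul_of_nonneg_left ?_ hl))
  linarith [le_max_left (d z - R) 0, le_max_left (d' z - R) 0]

end DaviesWeight

section GaussianBounds

open scoped Matrix

variable {ι : Type*} [Fintype ι] {p : ι → ℝ} {K : Matrix ι ι ℝ} {c : ℝ}
  {d d' w : ι → ℝ} {C F F' α κ a R D : ℝ} {n t : ℕ} {x y : ι}

/-- The density with respect to the weights `p` of the distribution of the walk after `t` steps
from `x`. -/
noncomputable def walkDensity [DecidableEq ι] (p : ι → ℝ) (K : Matrix ι ι ℝ) (t : ℕ) (x : ι) :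
    ι → ℝ :=
  fun z => (K ^ t) x z / p z

theorem IsReversible.pow_add_apply_div [DecidableEq ι] (hrev : IsReversible p K)
    (hp : ∀ x, 0 < p x) (t t' : ℕ) (x y : ι) :
    (K ^ (t + t')) x y / p y = ⟪walkDensity p K t x, walkDensity p K t' y⟫_[ℝ, p] := by
  rw [pow_add, Matrix.mul_apply, wInner_real_eq_sum, Finset.sum_div]
  refine Finset.sum_congr rfl fun z _ => ?_
  have hy := (hp y).ne'
  have hz := (hp z).ne'
  simp only [walkDensity]
  field_simp
  rw [mul_right_comm, mul_assoc, ← hrev.pow t' y z]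
  ring

theorem wInner_walkDensity [DecidableEq ι] (hp : ∀ x, 0 < p x) (t : ℕ) (x : ι) (f : ι → ℝ) :
    ⟪walkDensity p K t x, f⟫_[ℝ, p] = (K ^ t *ᵥ f) x := by
  rw [wInner_real_eq_sum]
  refine Finset.sum_congr rfl fun z _ => ?_
  rw [walkDensity, ← mul_assoc, mul_div_cancel₀ _ (hp z).ne']

theorem localNormSq_le_weightedNormSq_mul (hp : ∀ x, 0 < p x) (hw : ∀ z, d z ≤ R → w z = 1)
    (f : ι → ℝ) : localNormSq p d R f ≤ weightedNormSq p (w * f) := by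
  rw [localNormSq_eq_sum_ite]
  refine Finset.sum_le_sum fun z _ => ?_
  split_ifs with hz
  · rw [Pi.mul_apply, hw z hz, one_mul]
  · exact mul_nonneg (hp z).le (sq_nonneg _)

theorem IsLazySubMarkov.localNormSq_pow_mulVec_le_exp [DecidableEq ι] (hK : IsLazySubMarkov p K c)
    (hκ : 0 ≤ κ) (hw : ∀ x y, K x y ≠ 0 → (w x - w y) ^ 2 ≤ κ * w y ^ 2)
    (hw1 : ∀ z, d z ≤ R → w z = 1) (f : ι → ℝ) {s : ℕ} (hst : s ≤ t) :
    localNormSq p d R (K ^ s *ᵥ f) ≤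
      Real.exp (caccioppoliConst c * κ * t) * weightedNormSq p (w * f) := by
  have hA := caccioppoliConst_pos hK.holding_pos
  have hgrowth : (1 + caccioppoliConst c * κ) ^ s ≤ Real.exp (caccioppoliConst c * κ * t) :=
    calc (1 + caccioppoliConst c * κ) ^ s ≤ Real.exp (caccioppoliConst c * κ) ^ s := by
          gcongr
          rw [add_comm]
          exact Real.add_one_le_exp _
      _ = Real.exp (caccioppoliConst c * κ * s) := by rw [← Real.exp_nat_mul, mul_comm]
      _ ≤ Real.exp (caccioppoliConst c * κ * t) := by gcongr
  exact (localNormSq_le_weightedNormSq_mul hK.weight_pos hw1 _).trans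
    ((hK.weightedNormSq_mul_pow_mulVec_le hκ hw f s).trans
      (mul_le_mul_of_nonneg_right hgrowth (weightedNormSq_nonneg hK.weight_pos _)))

/-- Duality: the norm `E` to be estimated is the value at `x` of `K ^ t f` with
`f = walkDensity p K t x / w²`, so the mean value inequality bounds `E` by a multiple
of `√E`. -/
theorem weightedNormSq_walkDensity_div_le [DecidableEq ι] (hK : IsLazySubMarkov p K c)
    (hd : IsOneLipschitz K d)
    (hFK : HasFaberKrahn p K {z | d z ≤ R} (powerProfile C F α R)) (hC : 0 < C) (hα : 0 < α)
    (hF : 0 < F) (hR : 0 < R) (hRt : 8 ≤ R → R ^ 2 ≤ 3 * t) (hx : d x ≤ 0) (hκ : 0 ≤ κ)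
    (hw0 : ∀ z, 0 < w z) (hw : ∀ x y, K x y ≠ 0 → (w x - w y) ^ 2 ≤ κ * w y ^ 2)
    (hw1 : ∀ z, d z ≤ R → w z = 1) :
    weightedNormSq p (walkDensity p K t x / w) ≤
      4 / (startFraction c C α * F) * Real.exp (caccioppoliConst c * κ * t) := by
  have hη := startFraction_pos (α := α) hK.holding_pos hC
  set E := weightedNormSq p (walkDensity p K t x / w) with hE
  set G := Real.exp (caccioppoliConst c * κ * t)
  rcases (weightedNormSq_nonneg hK.weight_pos (walkDensity p K t x / w)).eq_or_lt with h0 | hpos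
  · rw [hE, ← h0]
    positivity
  set f := walkDensity p K t x / w / w with hf
  have hwf : w * f = walkDensity p K t x / w := by
    funext z
    exact mul_div_cancel₀ _ (hw0 z).ne'
  have hvalue : (K ^ t *ᵥ f) x = E := by
    rw [← wInner_walkDensity hK.weight_pos, wInner_real_eq_sum, hE, weightedNormSq]
    refine Finset.sum_congr rfl fun z _ => ?_
    simp only [hf, Pi.div_apply]
    ring
  set θ := √(G * E / (startFraction c C α * F))
  have hθsq : θ ^ 2 = G * E / (startFraction c C α * F) := Real.sq_sqrt (by positivity)
  have hmean : E ≤ 2 * θ := by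
    rw [← hvalue]
    refine pow_mulVec_apply_le_of_localNormSq_le hK hd hFK hC hα hF hR hRt
      (Real.sqrt_pos.2 (by positivity)) (fun s hs => ?_) hx
    rw [hθsq, mul_div_cancel₀ _ (by positivity), hE, ← hwf]
    exact hK.localNormSq_pow_mulVec_le_exp hκ hw hw1 f hs
  have hsq : E * E ≤ 4 / (startFraction c C α * F) * G * E :=
    calc E * E ≤ (2 * θ) ^ 2 := by
          rw [← sq]
          exact pow_le_pow_left₀ hpos.le hmean 2
      _ = 4 / (startFraction c C α * F) * G * E := by
        rw [mul_pow, hθsq]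
        ring
  exact le_of_mul_le_mul_right hsq hpos

theorem weightedNormSq_walkDensity_div_daviesWeight_le [DecidableEq ι] {l : ℝ}
    (hK : IsLazySubMarkov p K c) (hd : IsOneLipschitz K d)
    (hFK : HasFaberKrahn p K {z | d z ≤ R} (powerProfile C F α R)) (hC : 0 < C) (hα : 0 < α)
    (hF : 0 < F) (hR : 0 < R) (hRt : 8 ≤ R → R ^ 2 ≤ 3 * t) (hx : d x ≤ 0) (hl0 : 0 ≤ l)
    (hl1 : l ≤ 1) :
    weightedNormSq p (walkDensity p K t x / daviesWeight d R l) ≤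
      4 / (startFraction c C α * F) * Real.exp (caccioppoliConst c * (4 * l ^ 2) * t) :=
  weightedNormSq_walkDensity_div_le hK hd hFK hC hα hF hR hRt hx (by positivity)
    (daviesWeight_pos d R l) (fun x y hxy => sq_daviesWeight_sub_le hl0 hl1 (hd x y hxy))
    fun _ hz => daviesWeight_eq_one hz

theorem wInner_le_mul_sqrt_mul_sqrt {w' : ι → ℝ} (hp : ∀ x, 0 < p x) (hw : ∀ z, 0 < w z)
    (hw' : ∀ z, 0 < w' z) (ha : ∀ z, w z * w' z ≤ a) (ha0 : 0 ≤ a) (f g : ι → ℝ) :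
    ⟪f, g⟫_[ℝ, p] ≤ a * (√(weightedNormSq p (f / w)) * √(weightedNormSq p (g / w'))) := by
  have hsplit : ⟪f, g⟫_[ℝ, p] = ⟪f / w, w * w' * (g / w')⟫_[ℝ, p] := by
    simp only [wInner_real_eq_sum, Pi.div_apply, Pi.mul_apply]
    refine Finset.sum_congr rfl fun z _ => ?_
    have hz := (hw z).ne'
    have hz' := (hw' z).ne'
    field_simp
  have hnorm : weightedNormSq p (w * w' * (g / w')) ≤ a ^ 2 * weightedNormSq p (g / w') := by
    rw [← weightedNormSq_smul]
    refine Finset.sum_le_sum fun z _ => mul_le_mul_of_nonneg_left ?_ (hp z).le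
    simp only [Pi.mul_apply, Pi.smul_apply, smul_eq_mul, mul_pow _ ((g / w') z)]
    exact mul_le_mul_of_nonneg_right
      (pow_le_pow_left₀ (mul_pos (hw z) (hw' z)).le (ha z) 2) (sq_nonneg _)
  rw [hsplit]
  calc _ ≤ √(weightedNormSq p (f / w)) * √(weightedNormSq p (w * w' * (g / w'))) :=
        wInner_le_sqrt_mul_sqrt hp _ _
    _ ≤ √(weightedNormSq p (f / w)) * (a * √(weightedNormSq p (g / w'))) := by
        refine mul_le_mul_of_nonneg_left ?_ (Real.sqrt_nonneg _)
        rw [← Real.sqrt_sq ha0, ← Real.sqrt_mul (sq_nonneg a)]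
        exact Real.sqrt_le_sqrt hnorm
    _ = _ := mul_left_comm _ _ _

theorem IsOneLipschitz.abs_sub_le_of_pow_apply_ne_zero [DecidableEq ι] (hd : IsOneLipschitz K d)
    (h : (K ^ n) x y ≠ 0) : |d x - d y| ≤ n := by
  induction n generalizing x with
  | zero =>
    rw [pow_zero, Matrix.one_apply, ne_eq, ite_eq_right_iff, Classical.not_imp] at h
    rw [h.1, sub_self, abs_zero, Nat.cast_zero]
  | succ n ih =>
    rw [pow_succ', Matrix.mul_apply] at h
    obtain ⟨z, -, hz⟩ := Finset.exists_ne_zero_of_sum_ne_zero h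
    rw [Nat.cast_succ, add_comm]
    exact (abs_sub_le _ _ _).trans
      (add_le_add (hd x z (left_ne_zero_of_mul hz)) (ih (right_ne_zero_of_mul hz)))

/-- The rate `l` minimises `(2 A + 1) l² N - l D`, which bounds the exponent up to the constant in
`2 l R ≤ 1 + l² N`. -/
theorem exp_daviesWeight_mul_exp_le {A N : ℝ} (hA : 0 < A) (hN : 0 < N) (hRN : R ^ 2 = N)
    {l : ℝ} (hl : l = D / (2 * (2 * A + 1) * N)) :
    Real.exp (-(l * (D - 2 * R))) * Real.exp (A * (4 * l ^ 2) * N / 2) ≤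
      Real.exp 1 * Real.exp (-D ^ 2 / (4 * (2 * A + 1) * N)) := by
  rw [← Real.exp_add, ← Real.exp_add]
  refine Real.exp_le_exp.2 ?_
  have hyoung : 2 * l * R ≤ 1 + l ^ 2 * N := by
    rw [← hRN]
    nlinarith [sq_nonneg (l * R - 1)]
  have hopt : (2 * A + 1) * l ^ 2 * N - l * D = -D ^ 2 / (4 * (2 * A + 1) * N) := by
    rw [hl]
    field_simp
    ring
  rw [← hopt]
  linarith

theorem sqrt_mul_sqrt_le_div_sqrt {b M N e e' : ℝ} (hb : 0 < b) (hF : 0 < F) (hF' : 0 < F')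
    (hM : M ≤ 4 / (b * F) * Real.exp e) (hN : N ≤ 4 / (b * F') * Real.exp e') :
    √M * √N ≤ 4 / b / √(F * F') * Real.exp ((e + e') / 2) := by
  have hexp : Real.exp ((e + e') / 2) ^ 2 = Real.exp e * Real.exp e' := by
    rw [← Real.exp_nat_mul, ← Real.exp_add]
    ring_nf
  calc √M * √N ≤ √(4 / (b * F) * Real.exp e) * √(4 / (b * F') * Real.exp e') := by gcongr
    _ = √((4 / b / √(F * F') * Real.exp ((e + e') / 2)) ^ 2) := by
      rw [← Real.sqrt_mul (by positivity), mul_pow, div_pow, Real.sq_sqrt (by positivity), hexp]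
      congr 1
      field_simp
    _ = 4 / b / √(F * F') * Real.exp ((e + e') / 2) := Real.sqrt_sq (by positivity)

theorem sq_sqrt_natCast_le_three_mul_half (h : 8 ≤ √(n : ℝ)) (ht : n / 2 ≤ t) :
    √(n : ℝ) ^ 2 ≤ 3 * t := by
  rw [Real.sq_sqrt n.cast_nonneg]
  have hn : 64 ≤ n := by
    rw [← Nat.cast_le (α := ℝ), ← Real.sq_sqrt n.cast_nonneg]
    push_cast
    nlinarith
  exact_mod_cast (by lia : n ≤ 3 * t)

/-- Cauchy-Schwarz splits the walk at half time, and the product of the two weights supplies the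
exponential factor because `D ≤ d + d'`. -/
theorem pow_apply_div_le_exp_mul_exp [DecidableEq ι] {l : ℝ} (hK : IsLazySubMarkov p K c)
    (hd : IsOneLipschitz K d) (hd' : IsOneLipschitz K d') (hC : 0 < C) (hα : 0 < α)
    (hF : 0 < F) (hF' : 0 < F')
    (hFK : HasFaberKrahn p K {z | d z ≤ √n} (powerProfile C F α √n))
    (hFK' : HasFaberKrahn p K {z | d' z ≤ √n} (powerProfile C F' α √n)) (hn : 0 < n)
    (hx : d x ≤ 0) (hy : d' y ≤ 0) (hD : ∀ z, D ≤ d z + d' z) (hl0 : 0 ≤ l) (hl1 : l ≤ 1) :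
    (K ^ n) x y / p y ≤ 4 / startFraction c C α / √(F * F') *
      (Real.exp (-(l * (D - 2 * √n))) *
        Real.exp (caccioppoliConst c * (4 * l ^ 2) * n / 2)) := by
  have hη := startFraction_pos (α := α) hK.holding_pos hC
  have hR : 0 < √(n : ℝ) := Real.sqrt_pos.2 (Nat.cast_pos.2 hn)
  have hhalf : n / 2 + (n - n / 2) = n := by lia
  have hsqrt := sqrt_mul_sqrt_le_div_sqrt hη hF hF'
    (weightedNormSq_walkDensity_div_daviesWeight_le (t := n / 2) hK hd hFK hC hα hF hR
      (fun h8 => sq_sqrt_natCast_le_three_mul_half h8 le_rfl) hx hl0 hl1)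
    (weightedNormSq_walkDensity_div_daviesWeight_le (t := n - n / 2) hK hd' hFK' hC hα hF' hR
      (fun h8 => sq_sqrt_natCast_le_three_mul_half h8 (by lia)) hy hl0 hl1)
  rw [← mul_add, ← Nat.cast_add, hhalf] at hsqrt
  calc (K ^ n) x y / p y
      = ⟪walkDensity p K (n / 2) x, walkDensity p K (n - n / 2) y⟫_[ℝ, p] := by
        rw [← hK.reversible.pow_add_apply_div hK.weight_pos, hhalf]
    _ ≤ Real.exp (-(l * (D - 2 * √n))) *
          (√(weightedNormSq p (walkDensity p K (n / 2) x / daviesWeight d √n l)) *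
            √(weightedNormSq p (walkDensity p K (n - n / 2) y / daviesWeight d' √n l))) :=
        wInner_le_mul_sqrt_mul_sqrt hK.weight_pos (daviesWeight_pos d √n l)
          (daviesWeight_pos d' √n l) (fun z => daviesWeight_mul_le hl0 (hD z))
          (Real.exp_pos _).le _ _
    _ ≤ _ := by
        rw [mul_left_comm (4 / _ / _)]
        exact mul_le_mul_of_nonneg_left hsqrt (Real.exp_pos _).le

theorem pow_apply_div_le_gaussian [DecidableEq ι] (hK : IsLazySubMarkov p K c)
    (hd : IsOneLipschitz K d) (hd' : IsOneLipschitz K d') (hC : 0 < C) (hα : 0 < α)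
    (hF : 0 < F) (hF' : 0 < F')
    (hFK : HasFaberKrahn p K {z | d z ≤ √n} (powerProfile C F α √n))
    (hFK' : HasFaberKrahn p K {z | d' z ≤ √n} (powerProfile C F' α √n)) (hn : 0 < n)
    (hx : d x ≤ 0) (hy : d' y ≤ 0) (hD0 : 0 ≤ D) (hD : ∀ z, D ≤ d z + d' z) :
    (K ^ n) x y / p y ≤ 4 / startFraction c C α * Real.exp 1 / √(F * F') *
      Real.exp (-D ^ 2 / (4 * (2 * caccioppoliConst c + 1) * n)) := by
  have hη := startFraction_pos (α := α) hK.holding_pos hC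
  have hA := caccioppoliConst_pos hK.holding_pos
  have hn0 : (0 : ℝ) < n := Nat.cast_pos.2 hn
  rcases eq_or_ne ((K ^ n) x y) 0 with h0 | h0
  · rw [h0, zero_div]
    positivity
  have hDn : D ≤ n := by
    linarith [hD y, neg_le_of_abs_le (hd.abs_sub_le_of_pow_apply_ne_zero h0)]
  have hl1 : D / (2 * (2 * caccioppoliConst c + 1) * n) ≤ 1 := by
    rw [div_le_one (by positivity)]
    nlinarith [mul_pos hA hn0]
  refine (pow_apply_div_le_exp_mul_exp hK hd hd' hC hα hF hF' hFK hFK' hn hx hy hD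
    (by positivity) hl1).trans ?_
  rw [mul_div_right_comm _ (Real.exp 1), mul_assoc _ (Real.exp 1)]
  exact mul_le_mul_of_nonneg_left
    (exp_daviesWeight_mul_exp_le hA hn0 (Real.sq_sqrt n.cast_nonneg) rfl) (by positivity)

end GaussianBounds

section ZeroExtension

variable {V : Type*} {T : Finset V}

theorem hasSum_sum_coe {Φ : V → ℝ} (hΦ : ∀ z ∉ T, Φ z = 0) : HasSum Φ (∑ z : T, Φ z) := by
  rw [Finset.sum_coe_sort T Φ]
  exact hasSum_sum_of_ne_finset_zero hΦ

theorem extend_coe_apply (g : T → ℝ) (z : T) :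
    Function.extend Subtype.val g (0 : V → ℝ) z = g z :=
  Subtype.val_injective.extend_apply g 0 z

theorem extend_coe_eq_zero (g : T → ℝ) {z : V} (hz : z ∉ T) :
    Function.extend Subtype.val g (0 : V → ℝ) z = 0 :=
  Function.extend_apply' g _ z fun ⟨a, ha⟩ => hz (ha ▸ a.2)

theorem mem_of_extend_coe_ne_zero {g : T → ℝ} {z : V}
    (hz : Function.extend Subtype.val g (0 : V → ℝ) z ≠ 0) : z ∈ T :=
  not_imp_comm.1 (extend_coe_eq_zero g) hz

end ZeroExtension

namespace WeightedGraph

variable {V : Type*} (Γ : WeightedGraph V) {T : Finset V}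

theorem wE_self (x : V) : Γ.wE x x = 0 :=
  le_antisymm (not_lt.1 fun h => Γ.G.irrefl ((Γ.adapted x x).1 h)) (Γ.wE_nonneg x x)

theorem mkernel_self (x : V) :
    mkernel Γ.wV Γ.wE x x = 1 - (∑' z, Γ.wE x z) / Γ.wV x :=
  if_pos rfl

theorem mkernel_of_ne {x y : V} (h : x ≠ y) :
    mkernel Γ.wV Γ.wE x y = Γ.wE x y / Γ.wV x :=
  if_neg h

theorem mkernel_nonneg (x y : V) : 0 ≤ mkernel Γ.wV Γ.wE x y := by
  rcases eq_or_ne x y with rfl | h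
  · rw [Γ.mkernel_self, sub_nonneg, div_le_one (Γ.wV_pos x)]
    exact Γ.subordinate x
  · rw [Γ.mkernel_of_ne h]
    exact div_nonneg (Γ.wE_nonneg x y) (Γ.wV_pos x).le

theorem wV_mul_mkernel_of_ne {x y : V} (h : x ≠ y) :
    Γ.wV x * mkernel Γ.wV Γ.wE x y = Γ.wE x y := by
  rw [Γ.mkernel_of_ne h, mul_div_cancel₀ _ (Γ.wV_pos x).ne']

theorem wV_mul_mkernel_comm (x y : V) :
    Γ.wV x * mkernel Γ.wV Γ.wE x y = Γ.wV y * mkernel Γ.wV Γ.wE y x := by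
  rcases eq_or_ne x y with rfl | h
  · rfl
  · rw [Γ.wV_mul_mkernel_of_ne h, Γ.wV_mul_mkernel_of_ne h.symm, Γ.wE_symm]

theorem hasSum_mkernel (x : V) : HasSum (mkernel Γ.wV Γ.wE x) 1 := by
  classical
  have hsum := ((Γ.wE_summable x).hasSum.div_const (Γ.wV x)).add
    (hasSum_pi_single x (mkernel Γ.wV Γ.wE x x))
  rw [Γ.mkernel_self, add_sub_cancel] at hsum
  refine hsum.congr_fun fun y => ?_
  rcases eq_or_ne x y with rfl | h
  · rw [Γ.wE_self, zero_div, zero_add, Pi.single_eq_same, Γ.mkernel_self]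
  · rw [Pi.single_eq_of_ne h.symm, add_zero, Γ.mkernel_of_ne h]

theorem dist_le_one_of_mkernel_ne_zero {x y : V} (h : mkernel Γ.wV Γ.wE x y ≠ 0) :
    Γ.G.dist x y ≤ 1 := by
  rcases eq_or_ne x y with rfl | hxy
  · rw [SimpleGraph.dist_self]
    exact zero_le_one
  · rw [Γ.mkernel_of_ne hxy] at h
    exact (SimpleGraph.dist_eq_one_iff_adj.2 ((Γ.adapted x y).1
      ((Γ.wE_nonneg x y).lt_of_ne' (div_ne_zero_iff.1 h).1))).le

/-- The kernel of the random walk on `Γ` killed when it leaves the finite set `T`. -/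
noncomputable def killedKernel (T : Finset V) : Matrix T T ℝ :=
  Matrix.of fun x y => mkernel Γ.wV Γ.wE x y

theorem isLazySubMarkov_killedKernel {Ce : ℝ} (hlazy : Γ.UniformlyLazy Ce) (T : Finset V) :
    IsLazySubMarkov (fun x : T => Γ.wV x) (Γ.killedKernel T) Ce where
  weight_pos x := Γ.wV_pos x
  nonneg x y := Γ.mkernel_nonneg x y
  reversible x y := Γ.wV_mul_mkernel_comm x y
  row_sum_le_one x := (Finset.sum_coe_sort T (mkernel Γ.wV Γ.wE x)).trans_le
    (sum_le_hasSum T (fun y _ => Γ.mkernel_nonneg x y) (Γ.hasSum_mkernel x))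
  holding_pos := hlazy.1.1
  holding_le x := by
    change Ce ≤ mkernel Γ.wV Γ.wE x x
    rw [Γ.mkernel_self, le_sub_comm, div_le_iff₀ (Γ.wV_pos x)]
    exact hlazy.2 x

theorem isOneLipschitz_killedKernel (T : Finset V) (x : V) :
    IsOneLipschitz (Γ.killedKernel T) fun z => (Γ.G.dist x z : ℝ) := by
  intro y z hyz
  have hdist : Γ.G.dist (y : V) z ≤ 1 := Γ.dist_le_one_of_mkernel_ne_zero hyz
  have hxz : Γ.G.dist x z ≤ 1 + Γ.G.dist x y := by
    linarith [Γ.connected.dist_triangle (u := x) (v := y) (w := z)]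
  have hxy : Γ.G.dist x y ≤ 1 + Γ.G.dist x z := by
    linarith [Γ.connected.dist_triangle (u := x) (v := z) (w := y),
      Γ.G.dist_comm (u := (z : V)) (v := y)]
  simp only [abs_sub_le_iff, sub_le_iff_le_add]
  exact ⟨by exact_mod_cast hxy, by exact_mod_cast hxz⟩

theorem sqnorm_extend (g : T → ℝ) :
    Γ.sqnorm (Function.extend Subtype.val g 0) = weightedNormSq (fun x : T => Γ.wV x) g := by
  rw [sqnorm, (hasSum_sum_coe (T := T) fun z hz => ?_).tsum_eq, weightedNormSq]
  · exact Finset.sum_congr rfl fun z _ => by rw [extend_coe_apply, mul_comm]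
  · rw [extend_coe_eq_zero g hz]
    ring

theorem energy_eq_tsum_mkernel (f : V → ℝ) :
    Γ.energy f = (∑' x, Γ.wV x * ∑' y, (f x - f y) ^ 2 * mkernel Γ.wV Γ.wE x y) / 2 := by
  simp only [energy, ← tsum_mul_left]
  refine congrArg (· / 2) (tsum_congr fun x => tsum_congr fun y => ?_)
  rcases eq_or_ne x y with rfl | h
  · ring
  · rw [← Γ.wV_mul_mkernel_of_ne h]
    ring

theorem hasSum_sq_sub_mul_mkernel (g : T → ℝ) (x : V) :
    HasSum (fun y => (Function.extend Subtype.val g 0 x - Function.extend Subtype.val g 0 y) ^ 2 *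
        mkernel Γ.wV Γ.wE x y)
      (Function.extend Subtype.val g 0 x ^ 2 - 2 * Function.extend Subtype.val g 0 x *
        (∑ y : T, mkernel Γ.wV Γ.wE x y * g y) + ∑ y : T, mkernel Γ.wV Γ.wE x y * g y ^ 2) := by
  set f := Function.extend Subtype.val g (0 : V → ℝ)
  have hzero {y : V} (hy : y ∉ T) : f y = 0 := extend_coe_eq_zero g hy
  have hlinear := hasSum_sum_coe (T := T) (Φ := fun y => mkernel Γ.wV Γ.wE x y * f y)
    fun y hy => by rw [hzero hy, mul_zero]
  have hsquare := hasSum_sum_coe (T := T) (Φ := fun y => mkernel Γ.wV Γ.wE x y * f y ^ 2)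
    fun y hy => by rw [hzero hy]; ring
  have h := (((Γ.hasSum_mkernel x).mul_left (f x ^ 2)).sub (hlinear.mul_left (2 * f x))).add
    hsquare
  simp only [f, extend_coe_apply, mul_one] at h
  exact h.congr_fun fun y => by ring

theorem energy_extend (g : T → ℝ) :
    Γ.energy (Function.extend Subtype.val g 0) =
      dirichletForm (fun x : T => Γ.wV x) (Γ.killedKernel T) g := by
  set f := Function.extend Subtype.val g (0 : V → ℝ)
  have hlocal := hasSum_sum_coe (T := T) (Φ := fun x => Γ.wV x * (f x ^ 2 - 2 * f x *
      ∑ y : T, mkernel Γ.wV Γ.wE x y * g y)) fun x hx => by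
    rw [show f x = 0 from extend_coe_eq_zero g hx]
    ring
  have hmass : HasSum (fun x => Γ.wV x * ∑ y : T, mkernel Γ.wV Γ.wE x y * g y ^ 2)
      (∑ y : T, Γ.wV y * g y ^ 2) := by
    have h := hasSum_sum (s := Finset.univ) fun (y : T) _ =>
      (Γ.hasSum_mkernel y).mul_left (Γ.wV y * g y ^ 2)
    simp only [mul_one] at h
    refine h.congr_fun fun x => ?_
    rw [Finset.mul_sum]
    refine Finset.sum_congr rfl fun y _ => ?_
    rw [← mul_assoc, Γ.wV_mul_mkernel_comm]
    ring
  rw [energy_eq_tsum_mkernel, tsum_congr fun x => by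
    rw [(Γ.hasSum_sq_sub_mul_mkernel g x).tsum_eq, mul_add], (hlocal.add hmass).tsum_eq]
  simp only [f, extend_coe_apply, dirichletForm, weightedNormSq, wInner_real_eq_sum,
    Matrix.mulVec, dotProduct, killedKernel, Matrix.of_apply, ← Finset.sum_add_distrib,
    ← Finset.sum_sub_distrib, Finset.sum_div]
  exact Finset.sum_congr rfl fun x _ => by ring

theorem energy_nonneg (f : V → ℝ) : 0 ≤ Γ.energy f :=
  div_nonneg (tsum_nonneg fun x => tsum_nonneg fun y =>
    mul_nonneg (sq_nonneg _) (Γ.wE_nonneg x y)) zero_le_two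

theorem sqnorm_zero : Γ.sqnorm 0 = 0 := by
  simp only [sqnorm, Pi.zero_apply, ne_eq, OfNat.ofNat_ne_zero, not_false_eq_true, zero_pow,
    zero_mul, tsum_zero]

theorem sqnorm_nonneg (f : V → ℝ) : 0 ≤ Γ.sqnorm f :=
  tsum_nonneg fun x => mul_nonneg (sq_nonneg _) (Γ.wV_pos x).le

theorem lambda1_mul_sqnorm_le_energy {Ω : Finset V} {f : V → ℝ} (hf : ∀ x, f x ≠ 0 → x ∈ Ω) :
    Γ.lambda1 Ω * Γ.sqnorm f ≤ Γ.energy f := by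
  rcases (Γ.sqnorm_nonneg f).eq_or_lt with h0 | hpos
  · rw [← h0, mul_zero]
    exact Γ.energy_nonneg f
  · have hne : f ≠ 0 := by
      rintro rfl
      exact hpos.ne' Γ.sqnorm_zero
    rw [← le_div_iff₀ hpos]
    refine csInf_le ⟨0, ?_⟩ ⟨f, hne, hf, rfl⟩
    rintro _ ⟨g, -, -, rfl⟩
    exact div_nonneg (Γ.energy_nonneg g) (Γ.sqnorm_nonneg g)

variable {Γ} in
theorem IsRelFK.hasFaberKrahn_killedKernel {Λ : V → ℝ → ℝ → ℝ} (hΛ : Γ.IsRelFK Λ)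
    (T : Finset V) (x : V) (r : ℝ) :
    HasFaberKrahn (fun z : T => Γ.wV z) (Γ.killedKernel T) {z | (Γ.G.dist x z : ℝ) ≤ r}
      (Λ x r) := by
  intro g hg ν _ hgν
  rw [← Γ.sqnorm_extend, ← Γ.energy_extend]
  set f := Function.extend Subtype.val g (0 : V → ℝ)
  set Ω := (Finset.univ.filter fun z : T => g z ≠ 0).map (Function.Embedding.subtype _)
  have hfΩ (z : V) (hz : f z ≠ 0) : z ∈ Ω := by
    refine Finset.mem_map.2 ⟨⟨z, mem_of_extend_coe_ne_zero hz⟩, Finset.mem_filter.2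
      ⟨Finset.mem_univ _, ?_⟩, rfl⟩
    rwa [← extend_coe_apply g]
  rcases Ω.eq_empty_or_nonempty with hΩ | hΩ
  · have hf0 : f = 0 := funext fun z => by_contra fun hz =>
      Finset.notMem_empty z (hΩ ▸ hfΩ z hz)
    rw [hf0, Γ.sqnorm_zero, mul_zero]
    exact Γ.energy_nonneg 0
  · have hgap : Λ x r (∑ z ∈ Ω, Γ.wV z) ≤ Γ.lambda1 Ω := hΛ.2 x r Ω hΩ fun z hz => by
      obtain ⟨a, ha, rfl⟩ := Finset.mem_map.1 hz
      exact hg a (Finset.mem_filter.1 ha).2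
    have hmono : Λ x r ν ≤ Λ x r (∑ z ∈ Ω, Γ.wV z) :=
      hΛ.1 x r _ _ (Finset.sum_pos (fun z _ => Γ.wV_pos z) hΩ) ((Finset.sum_map _ _ _).trans_le hgν)
    exact (mul_le_mul_of_nonneg_right (hmono.trans hgap) (Γ.sqnorm_nonneg f)).trans
      (Γ.lambda1_mul_sqnorm_le_energy hfΩ)

open Classical in
/-- The probability that the walk from `x` is at `y` at time `n`, having visited only `T` at the
times `1, …, n`. -/
noncomputable def killedPow (T : Finset V) : ℕ → V → V → ℝ
  | 0, x, y => if x = y then 1 else 0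
  | n + 1, x, y => ∑ z ∈ T, mkernel Γ.wV Γ.wE x z * killedPow T n z y

theorem killedPow_mem_Icc (T : Finset V) (n : ℕ) (x y : V) :
    Γ.killedPow T n x y ∈ Set.Icc 0 1 := by
  classical
  induction n generalizing x with
  | zero =>
    rw [killedPow]
    split_ifs
    exacts [Set.right_mem_Icc.2 zero_le_one, Set.left_mem_Icc.2 zero_le_one]
  | succ n ih =>
    refine ⟨Finset.sum_nonneg fun z _ => mul_nonneg (Γ.mkernel_nonneg x z) (ih z).1, ?_⟩
    exact (Finset.sum_le_sum fun z _ =>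
      mul_le_of_le_one_right (Γ.mkernel_nonneg x z) (ih z).2).trans
      (sum_le_hasSum T (fun z _ => Γ.mkernel_nonneg x z) (Γ.hasSum_mkernel x))

theorem killedKernel_pow_apply [DecidableEq V] (T : Finset V) (n : ℕ) (x y : T) :
    (Γ.killedKernel T ^ n) x y = Γ.killedPow T n x y := by
  induction n generalizing x with
  | zero =>
    rcases eq_or_ne x y with rfl | h
    · exact (Matrix.one_apply_eq x).trans (if_pos rfl).symm
    · exact (Matrix.one_apply_ne h).trans (if_neg (Subtype.coe_ne_coe.2 h)).symm
  | succ n ih =>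
    rw [pow_succ', Matrix.mul_apply, killedPow,
      ← Finset.sum_coe_sort T fun z => mkernel Γ.wV Γ.wE x z * Γ.killedPow T n z y]
    exact Finset.sum_congr rfl fun z _ => congrArg _ (ih z)

open Filter Topology in
theorem tendsto_killedPow (n : ℕ) (x y : V) :
    Tendsto (fun T => Γ.killedPow T n x y) atTop (𝓝 (mkernelPow Γ.wV Γ.wE n x y)) := by
  classical
  induction n generalizing x with
  | zero => exact tendsto_const_nhds
  | succ n ih =>
    have htsum (T : Finset V) : Γ.killedPow T (n + 1) x y =
        ∑' z, if z ∈ T then mkernel Γ.wV Γ.wE x z * Γ.killedPow T n z y else 0 := by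
      rw [tsum_eq_sum fun z hz => if_neg hz, killedPow]
      exact Finset.sum_congr rfl fun z hz => (if_pos hz).symm
    simp only [htsum]
    refine tendsto_tsum_of_dominated_convergence (Γ.hasSum_mkernel x).summable (fun z => ?_)
      (Eventually.of_forall fun T z => ?_)
    · refine ((ih z).const_mul _).congr' ?_
      filter_upwards [eventually_ge_atTop {z}] with T hT
      rw [if_pos (hT (Finset.mem_singleton_self z))]
    · obtain ⟨h0, h1⟩ := Γ.killedPow_mem_Icc T n z y
      split_ifs
      · rw [Real.norm_of_nonneg (mul_nonneg (Γ.mkernel_nonneg x z) h0)]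
        exact mul_le_of_le_one_right (Γ.mkernel_nonneg x z) h1
      · rw [norm_zero]
        exact Γ.mkernel_nonneg x z

theorem heatKernel_le_of_killedKernel_pow_le [DecidableEq V] {n : ℕ} {x y : V} {b : ℝ}
    (h : ∀ T : Finset V, ∀ hx : x ∈ T, ∀ hy : y ∈ T,
      (Γ.killedKernel T ^ n) ⟨x, hx⟩ ⟨y, hy⟩ / Γ.wV y ≤ b) :
    Γ.heatKernel n x y ≤ b := by
  refine le_of_tendsto ((Γ.tendsto_killedPow n x y).div_const (Γ.wV y)) ?_
  filter_upwards [Filter.eventually_ge_atTop {x, y}] with T hT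
  have hT' := h T (hT (Finset.mem_insert_self x _))
    (hT (Finset.mem_insert_of_mem (Finset.mem_singleton_self y)))
  rwa [killedKernel_pow_apply] at hT'

end WeightedGraph

theorem faberKrahn_implies_heatKernel_upper_general {V : Type*} (Γ : WeightedGraph V) (Ce : ℝ)
    (hlazy : Γ.UniformlyLazy Ce) (F : V → ℝ → ℝ) (hF : ∀ z : V, ∀ r : ℝ, 0 < r → 0 < F z r)
    (C α : ℝ) (hC : 0 < C) (hα : 0 < α)
    (hfk : Γ.IsRelFK fun z r ν => C / r ^ 2 * (F z r / ν) ^ α) :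
    ∃ c₁ c₂ : ℝ, 0 < c₁ ∧ 0 < c₂ ∧ ∀ x y : V, ∀ n : ℕ, 1 ≤ n →
      Γ.heatKernel n x y ≤
        c₁ / √(F x √n * F y √n) * Real.exp (-(Γ.G.dist x y : ℝ) ^ 2 / (c₂ * n)) := by
  classical
  have hstart := startFraction_pos (α := α) hlazy.1.1 hC
  have hcacc := caccioppoliConst_pos hlazy.1.1
  refine ⟨4 / startFraction Ce C α * Real.exp 1, 4 * (2 * caccioppoliConst Ce + 1), by positivity,
    by positivity, fun x y n hn => Γ.heatKernel_le_of_killedKernel_pow_le fun T hx hy => ?_⟩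
  have hR : 0 < √(n : ℝ) := Real.sqrt_pos.2 (Nat.cast_pos.2 hn)
  have hself (z : V) : (Γ.G.dist z z : ℝ) ≤ 0 := by rw [SimpleGraph.dist_self, Nat.cast_zero]
  have htriangle (z : T) : (Γ.G.dist x y : ℝ) ≤ Γ.G.dist x z + Γ.G.dist y z := by
    rw [Γ.G.dist_comm (u := y)]
    exact_mod_cast Γ.connected.dist_triangle
  exact pow_apply_div_le_gaussian (Γ.isLazySubMarkov_killedKernel hlazy T)
    (Γ.isOneLipschitz_killedKernel T x) (Γ.isOneLipschitz_killedKernel T y) hC hα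
    (hF x _ hR) (hF y _ hR) (hfk.hasFaberKrahn_killedKernel T x _)
    (hfk.hasFaberKrahn_killedKernel T y _) hn (hself x) (hself y) (Nat.cast_nonneg _) htriangle

/-- **Theorem (Faber-Krahn implies heat kernel upper bound).**
Let `(Γ, wV, wE)` be a weighted graph with controlled and uniformly lazy weights, and
let `F` be a positive function of `(z, r)` such that `Λ(B(z,r), ν) = (C/r²)(F(z,r)/ν)^α`
is a relative Faber-Krahn function of `Γ`.  Then there are constants `c₁, c₂ > 0`
such that for all `x, y` and all integers `n ≥ 1`,
`p(n,x,y) ≤ c₁ (F(x,√n) F(y,√n))^{-1/2} exp(-d(x,y)²/(c₂ n))`. -/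
theorem faberKrahn_implies_heatKernel_upper {V : Type*} [Countable V]
    (Γ : WeightedGraph V) (Cc Ce : ℝ)
    (hctrl : Γ.Controlled Cc) (hlazy : Γ.UniformlyLazy Ce)
    (F : V → ℝ → ℝ) (hF : ∀ z : V, ∀ r : ℝ, 0 < r → 0 < F z r)
    (C α : ℝ) (hC : 0 < C) (hα : 0 < α)
    (hfk : Γ.IsRelFK (fun z r ν => (C / r ^ 2) * (F z r / ν) ^ α)) :
    ∃ c₁ c₂ : ℝ, 0 < c₁ ∧ 0 < c₂ ∧ ∀ x y : V, ∀ n : ℕ, 1 ≤ n →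
      Γ.heatKernel n x y ≤
        c₁ / Real.sqrt (F x (Real.sqrt n) * F y (Real.sqrt n)) *
          Real.exp (-(Γ.G.dist x y : ℝ) ^ 2 / (c₂ * n)) :=
  faberKrahn_implies_heatKernel_upper_general Γ Ce hlazy F hF C α hC hα hfk
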